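/- arXiv:0902.4070 — 10 statements merged into one kernel-verified Lean document; each statement's English description precedes it below -/
import Mathlib

section
/- Let 1/3 < p < 1/2 be a real number satisfying 2^{p/(1-p)}·( ((1-p)/p)^{1/(1-p)} − (1-p)/p ) − (1 + (3 − 1/p)/2)^{1/(1-p)} ≥ 0. Then for every nonnegative real sequence (a_n)_{n≥1}, one has ∑_{n=1}^∞ ( (1/n)·∑_{k=n}^∞ a_k )^p ≥ (p/(1-p))^p · ∑_{n=1}^∞ a_n^p. -/
open scoped ENNReal

/-!
Let `b = (1 - p) / p` and `r = 1 / (1 - p)`. For positive weights `D` with partial sums `S` and a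
sequence `ν` with `S n * ν n ^ (1 - p) = b⁻¹ ^ p`, exchanging the order of summation turns
`b⁻¹ ^ p * ∑ a n ^ p` into `∑ D n * ∑_{k ≥ n} a k ^ p * ν k ^ (1 - p)`, and Hölder's inequality
bounds the inner sum by `(∑_{k ≥ n} a k) ^ p * (∑_{k ≥ n} ν k) ^ (1 - p)`. It remains to choose `D`
such that `D n * (∑_{k ≥ n} ν k) ^ (1 - p) ≤ n⁻¹ ^ p`. Take `D 1 = 1` and
`n * D n = b * (S (n - 1) + S n) / 2` for `n ≥ 2`, so that `S n` grows like `n ^ b`. The tails of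
`ν` are then bounded by telescoping: for `n ≥ 2` the telescoping step is an inequality for
`y * (x / y) ^ r`, proved by differentiation, and for `n = 1` it is exactly the numerical condition
on `p`.
-/

namespace LevinSteckin

section Summation

lemma tsum_rpow_mul_rpow_le {ι : Type*} {p : ℝ} (hp0 : 0 ≤ p) (hp1 : p ≤ 1) (f g : ι → ℝ≥0∞) :
    ∑' i, f i ^ p * g i ^ (1 - p) ≤ (∑' i, f i) ^ p * (∑' i, g i) ^ (1 - p) := by
  let _ : MeasurableSpace ι := ⊤
  simpa only [MeasureTheory.lintegral_count] using
    ENNReal.lintegral_mul_norm_pow_le (μ := MeasureTheory.Measure.count)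
      (measurable_from_top (f := f)).aemeasurable (measurable_from_top (f := g)).aemeasurable
      hp0 (sub_nonneg.2 hp1) (add_sub_cancel p 1)

lemma tsum_tsum_add_eq_tsum_sum_range (f : ℕ → ℕ → ℝ≥0∞) :
    ∑' n, ∑' k, f n (n + k) = ∑' m, ∑ n ∈ Finset.range (m + 1), f n m := by
  rw [← ENNReal.tsum_prod (f := fun n k ↦ f n (n + k)),
    ← Finset.HasAntidiagonal.sigmaAntidiagonalEquivProd.tsum_eq, ENNReal.tsum_sigma']
  refine tsum_congr fun m ↦ ?_
  rw [← Finset.Nat.sum_antidiagonal_eq_sum_range_succ_mk (fun x ↦ f x.1 m), ← Finset.tsum_subtype]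
  exact tsum_congr fun x ↦ congrArg (f x.1.1) (Finset.HasAntidiagonal.mem_antidiagonal.1 x.2)

lemma tsum_add_le_of_add_succ_le {ν M : ℕ → ℝ≥0∞} (h : ∀ n, ν n + M (n + 1) ≤ M n) (n : ℕ) :
    ∑' k, ν (n + k) ≤ M n := by
  have partial_sum_le (N : ℕ) : ∑ k ∈ Finset.range N, ν (n + k) + M (n + N) ≤ M n := by
    induction N with
    | zero => simp
    | succ N ih =>
      rw [Finset.sum_range_succ, add_assoc]
      exact (add_le_add_right (h (n + N)) _).trans ih
  exact ENNReal.tsum_le_of_sum_range_le fun N ↦ le_self_add.trans (partial_sum_le N)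

lemma mul_tsum_rpow_le_tsum_mul_tsum_rpow {p : ℝ} (hp0 : 0 ≤ p) (hp1 : p ≤ 1) {C : ℝ≥0∞}
    {D ν v : ℕ → ℝ≥0∞} (hC : ∀ m, C ≤ (∑ n ∈ Finset.range (m + 1), D n) * ν m ^ (1 - p))
    (hv : ∀ n, D n * (∑' k, ν (n + k)) ^ (1 - p) ≤ v n ^ p) (c : ℕ → ℝ≥0∞) :
    C * ∑' n, c n ^ p ≤ ∑' n, (v n * ∑' k, c (n + k)) ^ p :=
  calc C * ∑' n, c n ^ p
      ≤ ∑' m, ∑ n ∈ Finset.range (m + 1), D n * (c m ^ p * ν m ^ (1 - p)) := by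
        rw [← ENNReal.tsum_mul_left]
        refine ENNReal.tsum_le_tsum fun m ↦ ?_
        rw [← Finset.sum_mul, mul_left_comm, mul_comm]
        gcongr
        exact hC m
    _ = ∑' n, D n * ∑' k, c (n + k) ^ p * ν (n + k) ^ (1 - p) := by
        rw [← tsum_tsum_add_eq_tsum_sum_range fun n m ↦ D n * (c m ^ p * ν m ^ (1 - p))]
        simp only [ENNReal.tsum_mul_left]
    _ ≤ ∑' n, D n * ((∑' k, c (n + k)) ^ p * (∑' k, ν (n + k)) ^ (1 - p)) := by
        gcongr
        exact tsum_rpow_mul_rpow_le hp0 hp1 _ _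
    _ ≤ ∑' n, (v n * ∑' k, c (n + k)) ^ p := by
        refine ENNReal.tsum_le_tsum fun n ↦ ?_
        rw [ENNReal.mul_rpow_of_nonneg _ _ hp0, mul_left_comm, mul_comm]
        gcongr
        exact hv n

lemma ofReal_mul_tsum_rpow_le_tsum_mul_tsum_rpow {p C : ℝ} (hp0 : 0 ≤ p) (hp1 : p ≤ 1)
    {D ν M v : ℕ → ℝ} (hD : ∀ n, 0 ≤ D n) (hν : ∀ n, 0 ≤ ν n) (hM : ∀ n, 0 ≤ M n)
    (hv : ∀ n, 0 ≤ v n) (hC : ∀ m, C ≤ (∑ n ∈ Finset.range (m + 1), D n) * ν m ^ (1 - p))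
    (hνM : ∀ n, ν n + M (n + 1) ≤ M n) (hDM : ∀ n, D n * M n ^ (1 - p) ≤ v n ^ p)
    (c : ℕ → ℝ≥0∞) :
    ENNReal.ofReal C * ∑' n, c n ^ p ≤ ∑' n, (ENNReal.ofReal (v n) * ∑' k, c (n + k)) ^ p := by
  have hq : 0 ≤ 1 - p := sub_nonneg.2 hp1
  have tail_le (n : ℕ) : ∑' k, ENNReal.ofReal (ν (n + k)) ≤ ENNReal.ofReal (M n) := by
    refine tsum_add_le_of_add_succ_le (ν := fun n ↦ ENNReal.ofReal (ν n))
      (M := fun n ↦ ENNReal.ofReal (M n)) (fun n ↦ ?_) n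
    rw [← ENNReal.ofReal_add (hν n) (hM (n + 1))]
    exact ENNReal.ofReal_le_ofReal (hνM n)
  refine mul_tsum_rpow_le_tsum_mul_tsum_rpow hp0 hp1 (D := fun n ↦ ENNReal.ofReal (D n))
    (ν := fun n ↦ ENNReal.ofReal (ν n)) (fun m ↦ ?_) (fun n ↦ ?_) c
  · rw [ENNReal.ofReal_rpow_of_nonneg (hν m) hq, ← ENNReal.ofReal_sum_of_nonneg fun n _ ↦ hD n,
      ← ENNReal.ofReal_mul (Finset.sum_nonneg fun n _ ↦ hD n)]
    exact ENNReal.ofReal_le_ofReal (hC m)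
  · calc ENNReal.ofReal (D n) * (∑' k, ENNReal.ofReal (ν (n + k))) ^ (1 - p)
        ≤ ENNReal.ofReal (D n) * ENNReal.ofReal (M n) ^ (1 - p) := by
          gcongr
          exact tail_le n
      _ = ENNReal.ofReal (D n * M n ^ (1 - p)) := by
          rw [ENNReal.ofReal_rpow_of_nonneg (hM n) hq, ENNReal.ofReal_mul (hD n)]
      _ ≤ ENNReal.ofReal (v n) ^ p := by
          rw [ENNReal.ofReal_rpow_of_nonneg (hv n) hp0]
          exact ENNReal.ofReal_le_ofReal (hDM n)

end Summation

section Perspective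

/-- The perspective `y * (x / y) ^ r` of the power function `x ↦ x ^ r`. The tails of the Hölder
masses below are bounded by multiples of it. -/
noncomputable def rpowPerspective (r x y : ℝ) : ℝ :=
  y * (x / y) ^ r

variable {r x y : ℝ}

lemma rpowPerspective_pos (hx : 0 < x) (hy : 0 < y) : 0 < rpowPerspective r x y :=
  mul_pos hy (Real.rpow_pos_of_pos (div_pos hx hy) r)

lemma rpowPerspective_eq_div (hx : 0 ≤ x) (hy : 0 < y) :
    rpowPerspective r x y = x ^ r / y ^ (r - 1) := by
  rw [rpowPerspective, Real.div_rpow hx hy.le, Real.rpow_sub_one hy.ne']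
  field_simp

lemma rpowPerspective_mul_left {c : ℝ} (hc : 0 ≤ c) (hx : 0 ≤ x) (hy : 0 ≤ y) :
    rpowPerspective r (c * x) y = c ^ r * rpowPerspective r x y := by
  rw [rpowPerspective, rpowPerspective, mul_div_assoc, Real.mul_rpow hc (div_nonneg hx hy),
    mul_left_comm]

lemma rpowPerspective_rpow {q : ℝ} (hrq : r * q = 1) (hx : 0 ≤ x) (hy : 0 < y) :
    rpowPerspective r x y ^ q = x * y⁻¹ ^ (1 - q) := by
  have hxy : 0 ≤ x / y := div_nonneg hx hy.le
  rw [rpowPerspective, Real.mul_rpow hy.le (Real.rpow_nonneg hxy r), ← Real.rpow_mul hxy, hrq,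
    Real.rpow_one, Real.inv_rpow hy.le, Real.rpow_sub hy, Real.rpow_one]
  field_simp

lemma hasDerivAt_rpowPerspective {f g : ℝ → ℝ} {f' g' s : ℝ} (hf : HasDerivAt f f' s)
    (hg : HasDerivAt g g' s) (hfs : 0 < f s) (hgs : 0 < g s) :
    HasDerivAt (fun t ↦ rpowPerspective r (f t) (g t))
      (r * f' * (f s / g s) ^ (r - 1) - (r - 1) * g' * (f s / g s) ^ r) s := by
  have ratio_ne : f s / g s ≠ 0 := (div_pos hfs hgs).ne'
  refine (hg.fun_mul ((hf.fun_div hg hgs.ne').rpow_const (p := r) (Or.inl ratio_ne))).congr_deriv ?_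
  have rpow_eq : (f s / g s) ^ r = (f s / g s) ^ (r - 1) * (f s / g s) := by
    rw [← Real.rpow_add_one ratio_ne, sub_add_cancel]
  rw [rpow_eq]
  field_simp
  ring

lemma two_le_rpow_add_rpow {t : ℝ} (hx : 0 < x) (hy : 0 < y) (hxy : 1 ≤ x * y) (ht : 0 ≤ t) :
    2 ≤ x ^ t + y ^ t := by
  have one_le_mul : 1 ≤ x ^ t * y ^ t := by
    rw [← Real.mul_rpow hx.le hy.le]
    exact Real.one_le_rpow hxy ht
  nlinarith [sq_nonneg (x ^ t - y ^ t), Real.rpow_pos_of_pos hx t, Real.rpow_pos_of_pos hy t]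

variable {u α s : ℝ}

lemma hasDerivAt_rpowPerspective_sub_reflected (hα : |α| ≤ 1) (hs0 : 0 ≤ s) (hsu : s < u) :
    HasDerivAt
      (fun t ↦ rpowPerspective r (u + α * t) (u - t) - rpowPerspective r (u - α * t) (u + t))
      (r * α * (((u + α * s) / (u - s)) ^ (r - 1) + ((u - α * s) / (u + s)) ^ (r - 1))
        + (r - 1) * (((u + α * s) / (u - s)) ^ r + ((u - α * s) / (u + s)) ^ r)) s := by
  obtain ⟨hα0, hα1⟩ := abs_le.1 hα
  have hαs : HasDerivAt (fun t ↦ α * t) α s := hasDerivAt_const_mul α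
  have forward := hasDerivAt_rpowPerspective (r := r) (hαs.const_add u)
    ((hasDerivAt_id' s).const_sub u) (by nlinarith) (by linarith)
  have backward := hasDerivAt_rpowPerspective (r := r) (hαs.const_sub u)
    ((hasDerivAt_id' s).const_add u) (by nlinarith) (by linarith)
  exact (forward.sub backward).congr_deriv (by ring)

lemma one_le_div_mul_div_reflected (hα : |α| ≤ 1) (hs0 : 0 ≤ s) (hsu : s < u) :
    1 ≤ (u + α * s) / (u - s) * ((u - α * s) / (u + s)) := by
  rw [div_mul_div_comm, one_le_div (mul_pos (by linarith) (by linarith))]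
  have sq_le : (α * s) ^ 2 ≤ s ^ 2 := by
    rw [mul_pow]
    exact mul_le_of_le_one_left (sq_nonneg s) (sq_le_one_iff_abs_le_one α |>.2 hα)
  nlinarith

lemma mul_le_rpowPerspective_sub_reflected (hr : 1 ≤ r) (hα0 : 0 ≤ α) (hα1 : α ≤ 1) (hs0 : 0 ≤ s)
    (hsu : s < u) :
    2 * (r * α + (r - 1)) * s ≤
      rpowPerspective r (u + α * s) (u - s) - rpowPerspective r (u - α * s) (u + s) := by
  have hα : |α| ≤ 1 := abs_le.2 ⟨by linarith, hα1⟩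
  have hderiv (t : ℝ) (ht : t ∈ Set.Ico 0 u) :=
    hasDerivAt_rpowPerspective_sub_reflected (r := r) hα ht.1 ht.2
  have growth := (convex_Ico 0 u).mul_sub_le_image_sub_of_le_deriv (C := 2 * (r * α + (r - 1)))
    (fun t ht ↦ (hderiv t ht).continuousAt.continuousWithinAt)
    (fun t ht ↦ (hderiv t (interior_subset ht)).differentiableAt.differentiableWithinAt)
    (fun t ht ↦ ?_) 0 ⟨le_rfl, hs0.trans_lt hsu⟩ s ⟨hs0, hsu⟩ hs0
  · simpa using growth
  · obtain ⟨ht0, htu⟩ := interior_subset ht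
    rw [(hderiv t ⟨ht0, htu⟩).deriv]
    have hfwd : 0 < (u + α * t) / (u - t) := div_pos (by nlinarith) (by linarith)
    have hbwd : 0 < (u - α * t) / (u + t) := div_pos (by nlinarith) (by linarith)
    have hprod := one_le_div_mul_div_reflected hα ht0 htu
    have hr1 : 0 ≤ r - 1 := sub_nonneg.2 hr
    calc 2 * (r * α + (r - 1)) = r * α * 2 + (r - 1) * 2 := by ring
      _ ≤ _ := by
        gcongr
        · exact two_le_rpow_add_rpow hfwd hbwd hprod hr1
        · exact two_le_rpow_add_rpow hfwd hbwd hprod (by linarith)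

lemma add_rpowPerspective_succ_le {b k : ℝ} (hr : 1 ≤ r) (hb1 : 1 ≤ b) (hb2 : b ≤ 2) (hk : 0 < k) :
    r * b - 1 + rpowPerspective r (k + 1 - b / 2) (k + 1) ≤ rpowPerspective r (k + b / 2) k := by
  -- Both perspectives lie on the line `t ↦ (u + (b - 1) * t, u - t)`, at `t = -1/2` and `t = 1/2`.
  have h := mul_le_rpowPerspective_sub_reflected (u := k + 1 / 2) (α := b - 1) (s := 1 / 2) hr
    (by linarith) (by linarith) (by norm_num) (by linarith)
  ring_nf at h ⊢
  linarith

end Perspective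

section Weights

/-- The partial sums `S n` of the weights, determined by `S 0 = 1` and
`(n + 2) * (S (n + 1) - S n) = b * (S n + S (n + 1)) / 2`, a discrete form of the equation
`x * S' = b * S` of the power `x ^ b`. The index `n` is the paper's `n + 1`. -/
noncomputable def weightSum (b : ℝ) (n : ℕ) : ℝ :=
  ∏ i ∈ Finset.range n, ((i + 2 + b / 2) / (i + 2 - b / 2))

/-- The weights `D n` with partial sums `weightSum b n`. -/
noncomputable def weight (b : ℝ) : ℕ → ℝ
  | 0 => 1
  | n + 1 => b * weightSum b n / (n + 2 - b / 2)

/-- The sequence `ν n` paired with `a n` in Hölder's inequality, normalized so that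
`S n * ν n ^ (1 - p)` does not depend on `n`. -/
noncomputable def holderMass (b r : ℝ) (n : ℕ) : ℝ :=
  b / (b * weightSum b n) ^ r

/-- The bound for the tail sum of `holderMass b r` from `n` on; it is the value for which
`D n * tailBound b r n ^ (1 - p) = (n + 1)⁻¹ ^ p`. -/
noncomputable def tailBound (b r : ℝ) : ℕ → ℝ
  | 0 => 1
  | n + 1 => rpowPerspective r (n + 2 - b / 2) (n + 2) / (b * weightSum b n) ^ r

variable {b r : ℝ}

lemma add_two_sub_half_pos (hb : b < 4) (n : ℕ) : 0 < (n : ℝ) + 2 - b / 2 := by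
  linarith [n.cast_nonneg (α := ℝ)]

lemma weightSum_succ (b : ℝ) (n : ℕ) :
    weightSum b (n + 1) = weightSum b n * ((n + 2 + b / 2) / (n + 2 - b / 2)) :=
  Finset.prod_range_succ _ n

lemma weightSum_pos (hb0 : 0 < b) (hb4 : b < 4) (n : ℕ) : 0 < weightSum b n :=
  Finset.prod_pos fun i _ ↦ div_pos (by positivity) (add_two_sub_half_pos hb4 i)

lemma weight_pos (hb0 : 0 < b) (hb4 : b < 4) : ∀ n, 0 < weight b n
  | 0 => one_pos
  | n + 1 => div_pos (mul_pos hb0 (weightSum_pos hb0 hb4 n)) (add_two_sub_half_pos hb4 n)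

lemma sum_weight (hb : b < 4) (n : ℕ) :
    ∑ i ∈ Finset.range (n + 1), weight b i = weightSum b n := by
  induction n with
  | zero => simp [weight, weightSum]
  | succ n ih =>
    have hden := (add_two_sub_half_pos hb n).ne'
    have hnum : (n : ℝ) + 2 + b / 2 = n + 2 - b / 2 + b := by ring
    rw [Finset.sum_range_succ, ih, weightSum_succ, weight, hnum, add_div, div_self hden]
    ring

lemma holderMass_pos (hb0 : 0 < b) (hb4 : b < 4) (n : ℕ) : 0 < holderMass b r n :=
  div_pos hb0 (Real.rpow_pos_of_pos (mul_pos hb0 (weightSum_pos hb0 hb4 n)) r)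

lemma tailBound_pos (hb0 : 0 < b) (hb4 : b < 4) : ∀ n, 0 < tailBound b r n
  | 0 => one_pos
  | n + 1 => div_pos (rpowPerspective_pos (add_two_sub_half_pos hb4 n) (by positivity))
      (Real.rpow_pos_of_pos (mul_pos hb0 (weightSum_pos hb0 hb4 n)) r)

lemma weightSum_mul_holderMass_rpow {p : ℝ} (hb0 : 0 < b) (hb4 : b < 4) (hrp : r * (1 - p) = 1)
    (n : ℕ) : weightSum b n * holderMass b r n ^ (1 - p) = b⁻¹ ^ p := by
  have hS := weightSum_pos hb0 hb4 n
  have hbS := mul_pos hb0 hS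
  rw [holderMass, Real.div_rpow hb0.le (Real.rpow_nonneg hbS.le r), ← Real.rpow_mul hbS.le, hrp,
    Real.rpow_one, Real.rpow_sub hb0, Real.rpow_one, Real.inv_rpow hb0.le]
  field_simp

lemma weight_mul_tailBound_rpow {p : ℝ} (hb0 : 0 < b) (hb4 : b < 4) (hrp : r * (1 - p) = 1) :
    ∀ n : ℕ, weight b n * tailBound b r n ^ (1 - p) = ((n : ℝ) + 1)⁻¹ ^ p
  | 0 => by simp [weight, tailBound]
  | n + 1 => by
    have hden := add_two_sub_half_pos hb4 n
    have hn : (0 : ℝ) < n + 2 := by positivity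
    have hbS := mul_pos hb0 (weightSum_pos hb0 hb4 n)
    rw [weight, tailBound, Real.div_rpow (rpowPerspective_pos hden hn).le
      (Real.rpow_nonneg hbS.le r), ← Real.rpow_mul hbS.le, hrp, Real.rpow_one,
      rpowPerspective_rpow hrp hden.le hn, sub_sub_cancel]
    push_cast
    rw [add_assoc (n : ℝ), one_add_one_eq_two, mul_div_assoc (_ - _),
      ← mul_assoc, div_mul_cancel₀ _ hden.ne', mul_div_cancel₀ _ hbS.ne']

lemma tailBound_succ_eq (hb0 : 0 < b) (hb4 : b < 4) (n : ℕ) :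
    tailBound b r (n + 1) =
      rpowPerspective r (n + 2 + b / 2) (n + 2) / (b * weightSum b (n + 1)) ^ r := by
  have hden := add_two_sub_half_pos hb4 n
  have hbS := mul_pos hb0 (weightSum_pos hb0 hb4 n)
  set ρ : ℝ := (n + 2 + b / 2) / (n + 2 - b / 2) with hρ
  have hρ0 : 0 < ρ := div_pos (by positivity) hden
  have hnum : (n : ℝ) + 2 + b / 2 = ρ * (n + 2 - b / 2) := (div_mul_cancel₀ _ hden.ne').symm
  rw [tailBound, weightSum_succ, ← hρ, hnum,
    rpowPerspective_mul_left hρ0.le hden.le (by positivity), ← mul_assoc,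
    mul_comm (b * weightSum b n), Real.mul_rpow hρ0.le hbS.le,
    mul_div_mul_left _ _ (Real.rpow_pos_of_pos hρ0 r).ne']

lemma holderMass_add_tailBound_succ_le (hb1 : 1 ≤ b) (hb2 : b ≤ 2) (hrb : r * b = b + 1)
    (hinit : b + rpowPerspective r (2 - b / 2) 2 ≤ b ^ r) (n : ℕ) :
    holderMass b r n + tailBound b r (n + 1) ≤ tailBound b r n := by
  have hb0 : 0 < b := by linarith
  have hb4 : b < 4 := by linarith
  rw [holderMass, tailBound, ← add_div]
  cases n with
  | zero =>
    rw [tailBound, div_le_one (Real.rpow_pos_of_pos (mul_pos hb0 (weightSum_pos hb0 hb4 0)) r)]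
    simpa [weightSum] using hinit
  | succ m =>
    have hbS := mul_pos hb0 (weightSum_pos hb0 hb4 (m + 1))
    have hr : 1 ≤ r := by nlinarith
    have step := add_rpowPerspective_succ_le (k := (m : ℝ) + 2) hr hb1 hb2 (by positivity)
    rw [hrb, add_sub_cancel_right] at step
    rw [tailBound_succ_eq hb0 hb4]
    have hcast : ((m + 1 : ℕ) : ℝ) + 2 = m + 2 + 1 := by push_cast; ring
    rw [hcast]
    gcongr

end Weights

lemma ofReal_mul_tsum_rpow_le_tsum_average_tail_rpow {p b r : ℝ} (hb1 : 1 ≤ b) (hb2 : b ≤ 2)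
    (hrp : r * (1 - p) = 1) (hrb : r * b = b + 1)
    (hinit : b + rpowPerspective r (2 - b / 2) 2 ≤ b ^ r) (c : ℕ → ℝ≥0∞) :
    ENNReal.ofReal (b⁻¹ ^ p) * ∑' n, c n ^ p ≤
      ∑' n : ℕ, (((n : ℝ≥0∞) + 1)⁻¹ * ∑' k, c (n + k)) ^ p := by
  have hb0 : 0 < b := by linarith
  have hb4 : b < 4 := by linarith
  have hpb : p * (b + 1) = 1 := by linear_combination (1 - p) * hrb - b * hrp
  have hp0 : 0 ≤ p := by nlinarith
  have hp1 : p ≤ 1 := by nlinarith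
  have hinv (n : ℕ) : ((n : ℝ≥0∞) + 1)⁻¹ = ENNReal.ofReal ((n : ℝ) + 1)⁻¹ := by
    rw [ENNReal.ofReal_inv_of_pos (by positivity), ENNReal.ofReal_add (by positivity) one_pos.le,
      ENNReal.ofReal_natCast, ENNReal.ofReal_one]
  simp only [hinv]
  refine ofReal_mul_tsum_rpow_le_tsum_mul_tsum_rpow hp0 hp1 (D := weight b) (ν := holderMass b r)
    (M := tailBound b r) (fun n ↦ (weight_pos hb0 hb4 n).le) (fun n ↦ (holderMass_pos hb0 hb4 n).le)
    (fun n ↦ (tailBound_pos hb0 hb4 n).le) (fun n ↦ by positivity) (fun n ↦ ?_)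
    (holderMass_add_tailBound_succ_le hb1 hb2 hrb hinit)
    (fun n ↦ (weight_mul_tailBound_rpow hb0 hb4 hrp n).le) c
  rw [sum_weight hb4, weightSum_mul_holderMass_rpow hb0 hb4 hrp]

end LevinSteckin

open LevinSteckin

theorem stmt_0_general (p : ℝ) (hp1 : 1 / 3 ≤ p) (hp2 : p < 1 / 2)
    (hcond : 0 ≤ (2 : ℝ) ^ (p / (1 - p)) *
        (((1 - p) / p) ^ ((1 : ℝ) / (1 - p)) - (1 - p) / p) -
        (1 + (3 - 1 / p) / 2) ^ ((1 : ℝ) / (1 - p)))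
    (c : ℕ → ℝ≥0∞) :
    ENNReal.ofReal ((p / (1 - p)) ^ p) * ∑' n, c n ^ p ≤
      ∑' n : ℕ, (((n : ℝ≥0∞) + 1)⁻¹ * ∑' k, c (n + k)) ^ p := by
  have hp0 : 0 < p := by linarith
  have hq0 : 0 < 1 - p := by linarith
  have hb1 : 1 ≤ (1 - p) / p := by rw [le_div_iff₀ hp0]; linarith
  have hb2 : (1 - p) / p ≤ 2 := by rw [div_le_iff₀ hp0]; linarith
  have hinit : (1 - p) / p + rpowPerspective (1 / (1 - p)) (2 - (1 - p) / p / 2) 2 ≤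
      ((1 - p) / p) ^ (1 / (1 - p)) := by
    have hexp : p / (1 - p) = 1 / (1 - p) - 1 := by field_simp; ring
    have hbase : 1 + (3 - 1 / p) / 2 = 2 - (1 - p) / p / 2 := by field_simp; ring
    rw [hexp, hbase, sub_nonneg, ← div_le_iff₀' (by positivity)] at hcond
    rw [rpowPerspective_eq_div (by linarith) two_pos]
    linarith
  rw [← inv_div (1 - p) p]
  exact ofReal_mul_tsum_rpow_le_tsum_average_tail_rpow hb1 hb2 (by field_simp)
    (by field_simp; ring) hinit c

/-- Levin–Stečkin type inequality for `1/3 < p < 1/2` satisfying condition (1.4):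
`∑_{n≥1} ((1/n) ∑_{k≥n} a_k)^p ≥ (p/(1-p))^p ∑_{n≥1} a_n^p`. -/
theorem stmt_0 (p : ℝ) (hp1 : 1 / 3 < p) (hp2 : p < 1 / 2)
    (hcond : 0 ≤ (2 : ℝ) ^ (p / (1 - p)) *
        (((1 - p) / p) ^ ((1 : ℝ) / (1 - p)) - (1 - p) / p) -
        (1 + (3 - 1 / p) / 2) ^ ((1 : ℝ) / (1 - p)))
    (a : ℕ → ℝ) (ha : ∀ n, 1 ≤ n → 0 ≤ a n) :
    ENNReal.ofReal ((p / (1 - p)) ^ p) * ∑' n : ℕ, ENNReal.ofReal (a (n + 1)) ^ p ≤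
      ∑' n : ℕ, (((n : ℝ≥0∞) + 1)⁻¹ * ∑' k : ℕ, ENNReal.ofReal (a (n + 1 + k))) ^ p := by
  simpa only [add_right_comm] using
    stmt_0_general p hp1.le hp2 hcond fun n ↦ ENNReal.ofReal (a (n + 1))
end

section
/- For every real p with 0 < p ≤ 0.346 and every nonnegative real sequence (a_n)_{n≥1}, one has ∑_{n=1}^∞ ( (1/n)·∑_{k=n}^∞ a_k )^p ≥ (p/(1-p))^p · ∑_{n=1}^∞ a_n^p. -/
open scoped ENNReal

/-!
Write `s = p / (1 - p)` and `A n = ∑_{k ≥ n} a k`. If multipliers `y n ≥ 0` satisfy `y 0 = 0` and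
`(1 + y (n + 1)) ^ (1 - p) ≤ y n ^ (1 - p) + (s (n + 1)) ^ (-p)`, then Hölder's inequality for
`A n = a n + A (n + 1)` telescopes to `∑ a n ^ p ≤ ∑ (s (n + 1)) ^ (-p) * A n ^ p`, which is the
theorem. An arithmetic progression of difference `s` solves the recursion as soon as it does so in
its first step: each step says that the power mean of exponent `-p` of an interval of length `1 + s`
is at least a given number, and translating the interval by `s` raises this mean by at least `s`.
For small `s` the progression may start at `y 0 = 0`; for larger `s` one or two initial terms are
chosen by hand, and the mean of exponent `-1/2`, which is explicit, bounds that of exponent `-p`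
from below.
-/

section Holder

variable {p : ℝ}

theorem rpow_mul_rpow_add_le (hp0 : 0 < p) (hp1 : p < 1) (a b c d : ℝ≥0∞) :
    a ^ p * c ^ (1 - p) + b ^ p * d ^ (1 - p) ≤ (a + b) ^ p * (c + d) ^ (1 - p) := by
  have h1p : 0 < 1 - p := sub_pos.2 hp1
  simpa [Fin.sum_univ_two, ENNReal.rpow_rpow_inv, hp0.ne', h1p.ne'] using
    ENNReal.inner_le_Lp_mul_Lq Finset.univ ![a ^ p, b ^ p] ![c ^ (1 - p), d ^ (1 - p)]
      (Real.HolderConjugate.inv_one_sub_inv hp0 hp1)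

variable {w y : ℕ → ℝ≥0∞}

theorem sum_rpow_add_le_of_multipliers (hp0 : 0 < p) (hp1 : p < 1)
    (hy : ∀ n, (1 + y (n + 1)) ^ (1 - p) ≤ y n ^ (1 - p) + w n) {a A : ℕ → ℝ≥0∞}
    (hA : ∀ n, A n = a n + A (n + 1)) (N : ℕ) :
    ∑ n ∈ Finset.range N, a n ^ p + A N ^ p * y N ^ (1 - p) ≤
      A 0 ^ p * y 0 ^ (1 - p) + ∑ n ∈ Finset.range N, w n * A n ^ p := by
  induction N with
  | zero => simp
  | succ N ih =>
    have step : a N ^ p + A (N + 1) ^ p * y (N + 1) ^ (1 - p) ≤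
        A N ^ p * y N ^ (1 - p) + w N * A N ^ p :=
      calc a N ^ p + A (N + 1) ^ p * y (N + 1) ^ (1 - p)
          ≤ A N ^ p * (1 + y (N + 1)) ^ (1 - p) := by
            simpa [← hA] using rpow_mul_rpow_add_le hp0 hp1 (a N) (A (N + 1)) 1 (y (N + 1))
        _ ≤ A N ^ p * (y N ^ (1 - p) + w N) := by gcongr; exact hy N
        _ = A N ^ p * y N ^ (1 - p) + w N * A N ^ p := by ring
    rw [Finset.sum_range_succ, Finset.sum_range_succ, add_assoc, ← add_assoc (A 0 ^ p * _)]
    calc _ ≤ ∑ n ∈ Finset.range N, a n ^ p + (A N ^ p * y N ^ (1 - p) + w N * A N ^ p) := by gcongr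
      _ ≤ _ := by rw [← add_assoc]; gcongr

theorem tsum_rpow_le_tsum_mul_tail_rpow (hp0 : 0 < p) (hp1 : p < 1)
    (hy : ∀ n, (1 + y (n + 1)) ^ (1 - p) ≤ y n ^ (1 - p) + w n) (hy0 : y 0 = 0)
    (a : ℕ → ℝ≥0∞) :
    ∑' n, a n ^ p ≤ ∑' n, w n * (∑' k, a (n + k)) ^ p := by
  have tail_eq (n : ℕ) : ∑' k, a (n + k) = a n + ∑' k, a (n + 1 + k) := by
    rw [tsum_eq_zero_add' ENNReal.summable]
    simp only [add_zero, add_right_comm, add_assoc]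
  refine ENNReal.tsum_le_of_sum_range_le fun N => ?_
  calc ∑ n ∈ Finset.range N, a n ^ p
      ≤ ∑ n ∈ Finset.range N, w n * (∑' k, a (n + k)) ^ p := by
        simpa [hy0, ENNReal.zero_rpow_of_pos (sub_pos.2 hp1)] using
          le_self_add.trans (sum_rpow_add_le_of_multipliers hp0 hp1 hy tail_eq N)
    _ ≤ _ := ENNReal.sum_le_tsum _

end Holder

section Bernoulli

variable {x l : ℝ}

theorem rpow_le_one_sub_add_mul (hx : 0 ≤ x) (hl0 : 0 ≤ l) (hl1 : l ≤ 1) :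
    x ^ l ≤ 1 - l + l * x := by
  have := rpow_one_add_le_one_add_mul_self (s := x - 1) (by linarith) hl0 hl1
  rw [add_sub_cancel] at this
  linarith

theorem one_add_mul_one_sub_inv_le_rpow (hx : 0 < x) (hl : 0 ≤ l) :
    1 + l * (1 - x⁻¹) ≤ x ^ l :=
  calc 1 + l * (1 - x⁻¹) ≤ Real.log x * l + 1 := by
        linarith [mul_le_mul_of_nonneg_left (Real.one_sub_inv_le_log_of_pos hx) hl]
    _ ≤ x ^ l := by
        rw [Real.rpow_def_of_pos hx]
        exact Real.add_one_le_exp _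

theorem rpow_neg_one_sub_add_mul_le {p : ℝ} (hp : 0 ≤ p) (hx : 0 < x) (hl0 : 0 ≤ l)
    (hl1 : l ≤ 1) : (1 - l + l * x) ^ (-p) ≤ 1 - l + l * x ^ (-p) :=
  calc (1 - l + l * x) ^ (-p)
      ≤ (x ^ l) ^ (-p) := Real.rpow_le_rpow_of_nonpos (by positivity)
        (rpow_le_one_sub_add_mul hx.le hl0 hl1) (neg_nonpos.2 hp)
    _ = (x ^ (-p)) ^ l := by
      rw [← Real.rpow_mul hx.le, ← Real.rpow_mul hx.le, mul_comm]
    _ ≤ 1 - l + l * x ^ (-p) := rpow_le_one_sub_add_mul (by positivity) hl0 hl1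

end Bernoulli

/-- For `0 < m` and `0 ≤ a < b`, this says that `m` is at most the power mean of exponent `-p` of
the interval `[a, b]`. It is normalised so that no root has to be taken. -/
def LePowerMean (p m a b : ℝ) : Prop :=
  ∫ t in a..b, (t / m) ^ (-p) ≤ b - a

theorem intervalIntegrable_div_rpow_neg {p : ℝ} (hp : p < 1) (m a b : ℝ) :
    IntervalIntegrable (fun t : ℝ => (t / m) ^ (-p)) MeasureTheory.volume a b := by
  rcases eq_or_ne m 0 with rfl | hm
  · simp
  · have h := (intervalIntegral.intervalIntegrable_rpow' (a := a * m⁻¹) (b := b * m⁻¹)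
      (neg_lt_neg hp)).comp_mul_right (c := m⁻¹)
    simpa [hm, div_eq_mul_inv] using h

theorem integral_le_sub_of_le_affine {f g : ℝ → ℝ} {a b l : ℝ} (hab : a ≤ b) (hl : 0 ≤ l)
    (hf : IntervalIntegrable f MeasureTheory.volume a b)
    (hg : IntervalIntegrable g MeasureTheory.volume a b)
    (hgf : ∀ t ∈ Set.Ioo a b, g t ≤ 1 - l + l * f t) (h : ∫ t in a..b, f t ≤ b - a) :
    ∫ t in a..b, g t ≤ b - a :=
  calc ∫ t in a..b, g t ≤ ∫ t in a..b, (1 - l + l * f t) :=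
        intervalIntegral.integral_mono_on_of_le_Ioo hab hg
          (intervalIntegrable_const.add (hf.const_mul l)) hgf
    _ = (1 - l) * (b - a) + l * ∫ t in a..b, f t := by
        rw [intervalIntegral.integral_add intervalIntegrable_const (hf.const_mul l),
          intervalIntegral.integral_const, intervalIntegral.integral_const_mul, smul_eq_mul,
          mul_comm (b - a)]
    _ ≤ (1 - l) * (b - a) + l * (b - a) := by gcongr
    _ = b - a := by ring

section LePowerMean

variable {p m a b : ℝ}

theorem lePowerMean_iff (hp : p < 1) (hm : 0 < m) (ha : 0 ≤ a) (hab : a ≤ b) :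
    LePowerMean p m a b ↔ b ^ (1 - p) - a ^ (1 - p) ≤ (b - a) * (1 - p) * m ^ (-p) := by
  have := sub_pos.2 hp
  have integral_eq : ∫ t in a..b, (t / m) ^ (-p) =
      (b ^ (1 - p) - a ^ (1 - p)) / ((1 - p) * m ^ (-p)) := by
    rw [intervalIntegral.integral_comp_div (fun t => t ^ (-p)) hm.ne',
      integral_rpow (Or.inl (neg_lt_neg hp)), neg_add_eq_sub,
      Real.div_rpow (ha.trans hab) hm.le, Real.div_rpow ha hm.le, sub_eq_add_neg 1 p,
      Real.rpow_add hm, Real.rpow_one, smul_eq_mul]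
    field_simp
  rw [LePowerMean, integral_eq, div_le_iff₀ (by positivity), mul_assoc]

theorem LePowerMean.of_exponent_le {r : ℝ} (h : LePowerMean r m a b) (hm : 0 < m) (ha : 0 ≤ a)
    (hab : a ≤ b) (hp : 0 ≤ p) (hpr : p ≤ r) (hr0 : 0 < r) (hr1 : r < 1) :
    LePowerMean p m a b := by
  refine integral_le_sub_of_le_affine (l := p / r) hab (by positivity)
    (intervalIntegrable_div_rpow_neg hr1 m a b)
    (intervalIntegrable_div_rpow_neg (hpr.trans_lt hr1) m a b) (fun t ht => ?_) h
  have ht0 : 0 < t := ha.trans_lt ht.1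
  calc (t / m) ^ (-p) = ((t / m) ^ (-r)) ^ (p / r) := by
        rw [← Real.rpow_mul (by positivity), neg_mul, mul_div_cancel₀ p hr0.ne']
    _ ≤ _ := rpow_le_one_sub_add_mul (by positivity) (by positivity) ((div_le_one hr0).2 hpr)

theorem LePowerMean.add_right {d : ℝ} (h : LePowerMean p m a b) (hp0 : 0 ≤ p) (hp1 : p < 1)
    (hm : 0 < m) (ha : 0 ≤ a) (hab : a ≤ b) (hd : 0 ≤ d) :
    LePowerMean p (m + d) (a + d) (b + d) := by
  have hmd : m / (m + d) ≤ 1 := (div_le_one (by positivity)).2 (by linarith)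
  rw [LePowerMean, ← intervalIntegral.integral_comp_add_right, add_sub_add_right_eq_sub]
  refine integral_le_sub_of_le_affine (l := m / (m + d)) hab (by positivity)
    (intervalIntegrable_div_rpow_neg hp1 m a b) ?_ (fun t ht => ?_) h
  · simpa using (intervalIntegrable_div_rpow_neg hp1 (m + d) (a + d) (b + d)).comp_add_right d
  · have ht0 : 0 < t := ha.trans_lt ht.1
    have shift_eq : (t + d) / (m + d) = 1 - m / (m + d) + m / (m + d) * (t / m) := by
      field_simp
      ring
    rw [shift_eq]
    exact rpow_neg_one_sub_add_mul_le hp0 (by positivity) (by positivity) hmd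

theorem lePowerMean_one_half {c : ℝ} (hm : 0 < m) (hc : 0 ≤ c) (hcm : c ≤ m) :
    LePowerMean (1 / 2) m ((m - c) ^ 2 / m) ((m + c) ^ 2 / m) := by
  have hle : (m - c) ^ 2 / m ≤ (m + c) ^ 2 / m := by gcongr; linarith
  rw [lePowerMean_iff (by norm_num) hm (by positivity) hle,
    show (1 - 1 / 2 : ℝ) = 1 / 2 by norm_num, ← Real.sqrt_eq_rpow, ← Real.sqrt_eq_rpow,
    Real.sqrt_div (sq_nonneg _), Real.sqrt_div (sq_nonneg _), Real.sqrt_sq (by linarith),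
    Real.sqrt_sq (by linarith), Real.rpow_neg hm.le, ← Real.sqrt_eq_rpow]
  refine le_of_eq ?_
  field_simp
  ring

end LePowerMean

/-- The base `p / (1 - p)` of the constant `(p / (1 - p)) ^ p`. -/
noncomputable def hardyRatio (p : ℝ) : ℝ :=
  p / (1 - p)

/-- There are nonnegative multipliers with initial value `v` for the weights
`(m + k * hardyRatio p) ^ (-p)`, as needed to telescope Hölder's inequality. The weights of the
theorem are those with `m = hardyRatio p`, and their multipliers have to start at `v = 0`; other
values of `m` and `v` describe what is left after some terms. -/
def HasMultipliers (p m v : ℝ) : Prop :=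
  ∃ y : ℕ → ℝ, (∀ k, 0 ≤ y k) ∧ y 0 = v ∧
    ∀ k : ℕ, (1 + y (k + 1)) ^ (1 - p) ≤ y k ^ (1 - p) + (m + k * hardyRatio p) ^ (-p)

section Multipliers

variable {p : ℝ}

theorem hardyRatio_pos (hp0 : 0 < p) (hp1 : p < 1) : 0 < hardyRatio p :=
  div_pos hp0 (sub_pos.2 hp1)

theorem hardyRatio_mul_one_sub (hp1 : p < 1) : hardyRatio p * (1 - p) = p :=
  div_mul_cancel₀ p (sub_pos.2 hp1).ne'

theorem hardyRatio_le_iff {c : ℝ} (hp1 : p < 1) : hardyRatio p ≤ c ↔ p ≤ c * (1 - p) :=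
  div_le_iff₀ (sub_pos.2 hp1)

theorem le_hardyRatio_iff {c : ℝ} (hp1 : p < 1) : c ≤ hardyRatio p ↔ c * (1 - p) ≤ p :=
  le_div_iff₀ (sub_pos.2 hp1)

theorem ofReal_rpow_mul_ofReal_rpow_neg {s : ℝ} (hs : 0 < s) (hp : 0 ≤ p) (n : ℕ) :
    ENNReal.ofReal (s ^ p) * ENNReal.ofReal ((s + n * s) ^ (-p)) = ((n : ℝ≥0∞) + 1)⁻¹ ^ p := by
  have real_eq : s ^ p * (s + n * s) ^ (-p) = ((n : ℝ) + 1)⁻¹ ^ p := by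
    rw [show s + n * s = s * (n + 1) by ring, Real.mul_rpow hs.le (by positivity), ← mul_assoc,
      ← Real.rpow_add hs, add_neg_cancel, Real.rpow_zero, one_mul, Real.rpow_neg (by positivity),
      Real.inv_rpow (by positivity)]
  rw [← ENNReal.ofReal_mul (by positivity), real_eq,
    ← ENNReal.ofReal_rpow_of_nonneg (by positivity) hp, ENNReal.ofReal_inv_of_pos (by positivity),
    ENNReal.ofReal_add (by positivity) zero_le_one, ENNReal.ofReal_natCast, ENNReal.ofReal_one]

theorem HasMultipliers.tsum_rpow_le (h : HasMultipliers p (hardyRatio p) 0) (hp0 : 0 < p)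
    (hp1 : p < 1) (a : ℕ → ℝ≥0∞) :
    ENNReal.ofReal (hardyRatio p ^ p) * ∑' n, a n ^ p ≤
      ∑' n : ℕ, (((n : ℝ≥0∞) + 1)⁻¹ * ∑' k, a (n + k)) ^ p := by
  obtain ⟨y, hy_nonneg, hy_zero, hy_step⟩ := h
  have hs := hardyRatio_pos hp0 hp1
  have h1p : 0 ≤ 1 - p := sub_nonneg.2 hp1.le
  have step (n : ℕ) : (1 + ENNReal.ofReal (y (n + 1))) ^ (1 - p) ≤
      ENNReal.ofReal (y n) ^ (1 - p) +
        ENNReal.ofReal ((hardyRatio p + n * hardyRatio p) ^ (-p)) := by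
    have := hy_nonneg n
    have := hy_nonneg (n + 1)
    rw [← ENNReal.ofReal_one, ← ENNReal.ofReal_add zero_le_one (hy_nonneg _),
      ENNReal.ofReal_rpow_of_nonneg (by positivity) h1p,
      ENNReal.ofReal_rpow_of_nonneg (hy_nonneg _) h1p,
      ← ENNReal.ofReal_add (by positivity) (by positivity)]
    exact ENNReal.ofReal_le_ofReal (hy_step n)
  calc ENNReal.ofReal (hardyRatio p ^ p) * ∑' n, a n ^ p
      ≤ ENNReal.ofReal (hardyRatio p ^ p) *
          ∑' n : ℕ, ENNReal.ofReal ((hardyRatio p + n * hardyRatio p) ^ (-p)) *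
            (∑' k, a (n + k)) ^ p :=
        mul_le_mul_right (tsum_rpow_le_tsum_mul_tail_rpow hp0 hp1 step (by simp [hy_zero]) a) _
    _ = ∑' n : ℕ, (((n : ℝ≥0∞) + 1)⁻¹ * ∑' k, a (n + k)) ^ p := by
        rw [← ENNReal.tsum_mul_left]
        simp only [← mul_assoc, ofReal_rpow_mul_ofReal_rpow_neg hs hp0.le,
          ENNReal.mul_rpow_of_nonneg _ _ hp0.le]

theorem HasMultipliers.cons {m v u : ℝ} (h : HasMultipliers p (m + hardyRatio p) u) (hv : 0 ≤ v)
    (hu : (1 + u) ^ (1 - p) ≤ v ^ (1 - p) + m ^ (-p)) : HasMultipliers p m v := by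
  obtain ⟨y, hy_nonneg, rfl, hy_step⟩ := h
  refine ⟨fun k => k.casesOn v y, ?_, rfl, ?_⟩
  · rintro (_ | k)
    · exact hv
    · exact hy_nonneg k
  · rintro (_ | k)
    · simpa using hu
    · have weight_eq : m + ((k + 1 : ℕ) : ℝ) * hardyRatio p =
          m + hardyRatio p + k * hardyRatio p := by
        push_cast
        ring
      rw [weight_eq]
      exact hy_step k

theorem LePowerMean.hasMultipliers {m v : ℝ} (h : LePowerMean p m v (v + (1 + hardyRatio p)))
    (hp0 : 0 < p) (hp1 : p < 1) (hm : 0 < m) (hv : 0 ≤ v) : HasMultipliers p m v := by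
  have hs := hardyRatio_pos hp0 hp1
  have shifted (k : ℕ) : LePowerMean p (m + k * hardyRatio p) (v + k * hardyRatio p)
      (v + k * hardyRatio p + (1 + hardyRatio p)) := by
    rw [add_right_comm v]
    exact h.add_right hp0.le hp1 hm hv (by linarith) (by positivity)
  refine ⟨fun k => v + k * hardyRatio p, fun k => by positivity, by simp, fun k => ?_⟩
  have hk := (lePowerMean_iff hp1 (by positivity) (by positivity) (by linarith)).1 (shifted k)
  rw [add_sub_cancel_left, add_mul 1, hardyRatio_mul_one_sub hp1, one_mul, sub_add_cancel,
    one_mul] at hk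
  have next_eq : 1 + (v + ((k + 1 : ℕ) : ℝ) * hardyRatio p) =
      v + k * hardyRatio p + (1 + hardyRatio p) := by
    push_cast
    ring
  rw [next_eq]
  linarith

-- The mean of exponent `-1/2` of the interval of length `1 + hardyRatio p` starting at this value
-- is exactly `m`.
theorem hasMultipliers_of_le_one_half {m : ℝ} (hp0 : 0 < p) (hp : p ≤ 1 / 2)
    (hm : (1 + hardyRatio p) / 4 ≤ m) :
    HasMultipliers p m ((m - (1 + hardyRatio p) / 4) ^ 2 / m) := by
  have hp1 : p < 1 := by linarith
  have hs := hardyRatio_pos hp0 hp1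
  have hm0 : 0 < m := by linarith
  have right_eq : (m + (1 + hardyRatio p) / 4) ^ 2 / m =
      (m - (1 + hardyRatio p) / 4) ^ 2 / m + (1 + hardyRatio p) := by
    field_simp
    ring
  have mean := lePowerMean_one_half hm0 (by positivity) hm
  rw [right_eq] at mean
  exact (mean.of_exponent_le hm0 (by positivity) (by linarith) hp0.le hp (by norm_num)
    (by norm_num)).hasMultipliers hp0 hp1 hm0 (by positivity)

theorem one_add_rpow_le_of_le_rpow_neg_self {u : ℝ} (hp0 : 0 < p) (hp1 : p < 1) (hu : 0 ≤ u)
    (h : 1 + u ≤ hardyRatio p ^ (-hardyRatio p)) :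
    (1 + u) ^ (1 - p) ≤ 0 ^ (1 - p) + hardyRatio p ^ (-p) := by
  have h1p : 0 < 1 - p := sub_pos.2 hp1
  rw [Real.zero_rpow h1p.ne', zero_add]
  calc (1 + u) ^ (1 - p) ≤ (hardyRatio p ^ (-hardyRatio p)) ^ (1 - p) := by gcongr
    _ = hardyRatio p ^ (-p) := by
      rw [← Real.rpow_mul (hardyRatio_pos hp0 hp1).le, neg_mul, hardyRatio_mul_one_sub hp1]

end Multipliers

section RpowNegSelf

theorem one_add_le_rpow_neg_self {s : ℝ} (hs0 : 0 < s) (hs : s ≤ Real.exp (-1)) :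
    1 + s ≤ s ^ (-s) := by
  have log_le : Real.log s ≤ -1 := (Real.log_le_iff_le_exp hs0).2 hs
  rw [Real.rpow_def_of_pos hs0, add_comm]
  exact (Real.add_one_le_exp s).trans (Real.exp_le_exp.2 (by nlinarith))

theorem antitoneOn_rpow_neg_self :
    AntitoneOn (fun x : ℝ => x ^ (-x)) (Set.Ici (Real.exp (-1))) := by
  intro s hs t _ hst
  have hs0 : 0 < s := (Real.exp_pos _).trans_le hs
  have ht0 : 0 < t := hs0.trans_le hst
  have log_ge : -1 ≤ Real.log s := (Real.le_log_iff_exp_le hs0).2 hs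
  have tangent : t - s ≤ t * (Real.log t - Real.log s) :=
    calc t - s = t * (1 - (t / s)⁻¹) := by field_simp
      _ ≤ t * Real.log (t / s) := by
        gcongr
        exact Real.one_sub_inv_le_log_of_pos (by positivity)
      _ = t * (Real.log t - Real.log s) := by rw [Real.log_div ht0.ne' hs0.ne']
  simp only [Real.rpow_def_of_pos hs0, Real.rpow_def_of_pos ht0, Real.exp_le_exp]
  nlinarith [mul_nonneg (sub_nonneg.2 hst) (neg_le_iff_add_nonneg.1 log_ge)]

end RpowNegSelf

section Numerics

variable {x y : ℝ} {k n : ℕ}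

theorem le_rpow_div_of_pow_le_pow (hn : n ≠ 0) (hx : 0 ≤ x) (hy : 0 ≤ y) (h : y ^ n ≤ x ^ k) :
    y ≤ x ^ ((k : ℝ) / n) := by
  rw [div_eq_mul_inv, Real.rpow_mul hx, Real.rpow_natCast,
    Real.le_rpow_inv_iff_of_pos hy (by positivity) (by positivity), Real.rpow_natCast]
  exact h

theorem rpow_div_le_of_pow_le_pow (hn : n ≠ 0) (hx : 0 ≤ x) (hy : 0 ≤ y) (h : x ^ k ≤ y ^ n) :
    x ^ ((k : ℝ) / n) ≤ y := by
  rw [div_eq_mul_inv, Real.rpow_mul hx, Real.rpow_natCast,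
    Real.rpow_inv_le_iff_of_pos (by positivity) hy (by positivity), Real.rpow_natCast]
  exact h

end Numerics

section Construction

variable {p : ℝ}

theorem hasMultipliers_of_hardyRatio_le_exp_neg_one (hp0 : 0 < p) (hp1 : p < 1)
    (hs : hardyRatio p ≤ Real.exp (-1)) : HasMultipliers p (hardyRatio p) 0 := by
  have hs0 := hardyRatio_pos hp0 hp1
  have first := one_add_rpow_le_of_le_rpow_neg_self hp0 hp1 hs0.le (one_add_le_rpow_neg_self hs0 hs)
  refine LePowerMean.hasMultipliers ?_ hp0 hp1 hs0 le_rfl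
  rw [lePowerMean_iff hp1 hs0 le_rfl (by linarith), zero_add, sub_zero, add_mul,
    hardyRatio_mul_one_sub hp1, one_mul, sub_add_cancel, one_mul]
  linarith

theorem hasMultipliers_of_le_one_third (hp0 : 0 < p) (hp : p ≤ 1 / 3)
    (hs : Real.exp (-1) ≤ hardyRatio p) : HasMultipliers p (hardyRatio p) 0 := by
  have hp1 : p < 1 := by linarith
  have s_le : hardyRatio p ≤ 1 / 2 := (hardyRatio_le_iff hp1).2 (by linarith)
  have second := hasMultipliers_of_le_one_half (m := hardyRatio p + hardyRatio p) hp0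
    (by linarith) (by linarith [Real.exp_neg_one_gt_d9])
  set s := hardyRatio p
  have s_ge : 1 / 3 ≤ s := by linarith [Real.exp_neg_one_gt_d9]
  have start_le : 1 + (s + s - (1 + s) / 4) ^ 2 / (s + s) ≤ 7 / 5 := by
    rw [← le_sub_iff_add_le', div_le_iff₀ (by linarith)]
    nlinarith
  have first_le : (7 / 5 : ℝ) ≤ s ^ (-s) :=
    calc (7 / 5 : ℝ) ≤ √2 := Real.le_sqrt_of_sq_le (by norm_num)
      _ = (1 / 2) ^ (-(1 / 2) : ℝ) := by
          rw [Real.rpow_neg (by norm_num), ← Real.inv_rpow (by norm_num), Real.sqrt_eq_rpow]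
          norm_num
      _ ≤ s ^ (-s) := antitoneOn_rpow_neg_self hs Real.exp_neg_one_lt_half.le s_le
  exact second.cons le_rfl
    (one_add_rpow_le_of_le_rpow_neg_self hp0 hp1 (by positivity) (start_le.trans first_le))

set_option exponentiation.threshold 500 in
theorem le_hardyRatio_rpow_neg_self (hp : 1 / 3 ≤ p) (hp1 : p ≤ 0.346) :
    1.4003 ≤ hardyRatio p ^ (-hardyRatio p) := by
  have s_ge : 1 / 2 ≤ hardyRatio p := (le_hardyRatio_iff (by linarith)).2 (by linarith)
  have s_le : hardyRatio p ≤ 173 / 327 := (hardyRatio_le_iff (by linarith)).2 (by linarith)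
  have exp_le := Real.exp_neg_one_lt_half.le
  calc (1.4003 : ℝ) ≤ (327 / 173) ^ (((173 : ℕ) : ℝ) / (327 : ℕ)) :=
        le_rpow_div_of_pow_le_pow (by norm_num) (by norm_num) (by norm_num) (by norm_num)
    _ = (173 / 327) ^ (-(173 / 327) : ℝ) := by
        rw [Real.rpow_neg (by norm_num), ← Real.inv_rpow (by norm_num)]
        norm_num
    _ ≤ hardyRatio p ^ (-hardyRatio p) :=
        antitoneOn_rpow_neg_self (exp_le.trans s_ge) (exp_le.trans (by norm_num)) s_le

set_option exponentiation.threshold 500 in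
theorem linear_le_rpow_one_sub (hp1 : p ≤ 0.346) :
    0.5494 * (1 - 1.5 * (0.346 - p)) ≤ (0.4003 : ℝ) ^ (1 - p) := by
  have at_endpoint : (0.5494 : ℝ) ≤ 0.4003 ^ (0.654 : ℝ) := by
    rw [show (0.654 : ℝ) = ((327 : ℕ) : ℝ) / (500 : ℕ) by norm_num]
    exact le_rpow_div_of_pow_le_pow (by norm_num) (by norm_num) (by norm_num) (by norm_num)
  have correction : 1 - 1.5 * (0.346 - p) ≤ (0.4003 : ℝ) ^ (0.346 - p) := by
    refine le_trans ?_ (one_add_mul_one_sub_inv_le_rpow (by norm_num) (sub_nonneg.2 hp1))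
    linarith
  calc 0.5494 * (1 - 1.5 * (0.346 - p)) ≤ 0.5494 * (0.4003 : ℝ) ^ (0.346 - p) := by gcongr
    _ ≤ (0.4003 : ℝ) ^ (0.654 : ℝ) * (0.4003 : ℝ) ^ (0.346 - p) := by gcongr
    _ = (0.4003 : ℝ) ^ (1 - p) := by
        rw [← Real.rpow_add (by norm_num)]
        ring_nf

set_option exponentiation.threshold 500 in
theorem le_add_self_hardyRatio_rpow_neg (hp0 : 0 < p) (hp1 : p ≤ 0.346) :
    0.9806 ≤ (hardyRatio p + hardyRatio p) ^ (-p) := by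
  have hs : 0 < hardyRatio p := hardyRatio_pos hp0 (by linarith)
  have s_le : hardyRatio p ≤ 173 / 327 := (hardyRatio_le_iff (by linarith)).2 (by linarith)
  calc (0.9806 : ℝ) ≤ (327 / 346) ^ (((173 : ℕ) : ℝ) / (500 : ℕ)) :=
        le_rpow_div_of_pow_le_pow (by norm_num) (by norm_num) (by norm_num) (by norm_num)
    _ = (346 / 327) ^ (-(173 / 500) : ℝ) := by
        rw [Real.rpow_neg (by norm_num), ← Real.inv_rpow (by norm_num)]
        norm_num
    _ ≤ (346 / 327) ^ (-p) := Real.rpow_le_rpow_of_exponent_le (by norm_num) (by linarith)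
    _ ≤ (hardyRatio p + hardyRatio p) ^ (-p) :=
        Real.rpow_le_rpow_of_nonpos (by positivity) (by linarith) (by linarith)

set_option exponentiation.threshold 500 in
theorem rpow_one_sub_le_linear {u : ℝ} (hp : 1 / 3 ≤ p) (hp1 : p ≤ 0.346) (hu0 : 0 ≤ u)
    (hu : u ≤ 1.9147 - 5 * (0.346 - p)) :
    u ^ (1 - p) ≤ 1.5294 * (1 - 0.78 * (0.346 - p)) := by
  obtain ⟨e, rfl⟩ : ∃ e, p = 0.346 - e := ⟨0.346 - p, by ring⟩
  have e_nonneg : 0 ≤ e := by linarith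
  have base_nonneg : 0 ≤ 1 - 5 / 1.9147 * e := by linarith
  have at_endpoint : (1.9147 : ℝ) ^ (0.654 : ℝ) ≤ 1.5294 := by
    rw [show (0.654 : ℝ) = ((327 : ℕ) : ℝ) / (500 : ℕ) by norm_num]
    exact rpow_div_le_of_pow_le_pow (by norm_num) (by norm_num) (by norm_num) (by norm_num)
  have base_correction : (1 - 5 / 1.9147 * e) ^ (0.654 + e) ≤ 1 - 1.7 * e := by
    refine (rpow_le_one_sub_add_mul base_nonneg (by positivity) (by linarith)).trans ?_
    nlinarith
  have exponent_correction : (1.9147 : ℝ) ^ e ≤ 1 + 0.9147 * e := by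
    refine (rpow_le_one_sub_add_mul (by norm_num) e_nonneg (by linarith)).trans_eq ?_
    ring
  calc u ^ (1 - (0.346 - e)) = u ^ (0.654 + e) := by ring_nf
    _ ≤ (1.9147 * (1 - 5 / 1.9147 * e)) ^ (0.654 + e) := by
        gcongr
        linarith
    _ = 1.9147 ^ (0.654 : ℝ) * (1.9147 ^ e * (1 - 5 / 1.9147 * e) ^ (0.654 + e)) := by
        rw [Real.mul_rpow (by norm_num) base_nonneg, Real.rpow_add (by norm_num), mul_assoc]
    _ ≤ 1.5294 * ((1 + 0.9147 * e) * (1 - 1.7 * e)) := by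
        gcongr
    _ ≤ 1.5294 * (1 - 0.78 * (0.346 - (0.346 - e))) := by
        nlinarith

-- The first two multipliers after `0` are the constant `0.4003`, just below the largest value
-- `s ^ (-s) - 1` that the first step admits at `p = 0.346`, and the start `u` of the progression,
-- for which `1 + u` is just below `1.9147` at `p = 0.346`.
theorem hasMultipliers_of_one_third_le (hp : 1 / 3 ≤ p) (hp1 : p ≤ 0.346) :
    HasMultipliers p (hardyRatio p) 0 := by
  have hp0 : 0 < p := by linarith
  have h1p : 0 < 1 - p := by linarith
  have s_pos : 0 < hardyRatio p := hardyRatio_pos hp0 (by linarith)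
  have s_ge : 1 / 3 ≤ hardyRatio p := (le_hardyRatio_iff (by linarith)).2 (by linarith)
  have third := hasMultipliers_of_le_one_half (m := hardyRatio p + hardyRatio p + hardyRatio p)
    hp0 (by linarith) (by linarith)
  set u := (hardyRatio p + hardyRatio p + hardyRatio p - (1 + hardyRatio p) / 4) ^ 2 /
    (hardyRatio p + hardyRatio p + hardyRatio p) with hu
  have u_le : 1 + u ≤ 1.9147 - 5 * (0.346 - p) := by
    have u_eq : 1 + u = (96 * p ^ 2 + 24 * p + 1) / (48 * p * (1 - p)) := by
      rw [hu, hardyRatio]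
      field_simp
      ring
    rw [u_eq, div_le_iff₀ (by positivity)]
    nlinarith [mul_nonneg (sub_nonneg.2 hp) (sub_nonneg.2 hp1),
      mul_nonneg (mul_nonneg (sub_nonneg.2 hp) (sub_nonneg.2 hp1)) hp0.le]
  have second : (1 + u) ^ (1 - p) ≤ 0.4003 ^ (1 - p) + (hardyRatio p + hardyRatio p) ^ (-p) := by
    linarith [rpow_one_sub_le_linear hp hp1 (by positivity) u_le, linear_le_rpow_one_sub hp1,
      le_add_self_hardyRatio_rpow_neg hp0 hp1]
  have first := one_add_rpow_le_of_le_rpow_neg_self (u := 0.4003) hp0 (by linarith) (by norm_num)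
    (by linarith [le_hardyRatio_rpow_neg_self hp hp1])
  exact (third.cons (by norm_num) second).cons le_rfl first

theorem hasMultipliers_hardyRatio_zero (hp0 : 0 < p) (hp1 : p ≤ 0.346) :
    HasMultipliers p (hardyRatio p) 0 := by
  rcases le_total (hardyRatio p) (Real.exp (-1)) with hs | hs
  · exact hasMultipliers_of_hardyRatio_le_exp_neg_one hp0 (by linarith) hs
  rcases le_total p (1 / 3) with hp | hp
  · exact hasMultipliers_of_le_one_third hp0 hp hs
  · exact hasMultipliers_of_one_third_le hp hp1

end Construction

theorem stmt_1_general {p : ℝ} (hp0 : 0 < p) (hp1 : p ≤ 0.346) (a : ℕ → ℝ≥0∞) :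
    ENNReal.ofReal ((p / (1 - p)) ^ p) * ∑' n, a n ^ p ≤
      ∑' n : ℕ, (((n : ℝ≥0∞) + 1)⁻¹ * ∑' k, a (n + k)) ^ p :=
  (hasMultipliers_hardyRatio_zero hp0 hp1).tsum_rpow_le hp0 (by linarith) a

/-- For `0 < p ≤ 0.346`:
`∑_{n≥1} ((1/n) ∑_{k≥n} a_k)^p ≥ (p/(1-p))^p ∑_{n≥1} a_n^p`. -/
theorem stmt_1 (p : ℝ) (hp0 : 0 < p) (hp1 : p ≤ 0.346)
    (a : ℕ → ℝ) (ha : ∀ n, 1 ≤ n → 0 ≤ a n) :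
    ENNReal.ofReal ((p / (1 - p)) ^ p) * ∑' n : ℕ, ENNReal.ofReal (a (n + 1)) ^ p ≤
      ∑' n : ℕ, (((n : ℝ≥0∞) + 1)⁻¹ * ∑' k : ℕ, ENNReal.ofReal (a (n + 1 + k))) ^ p := by
  simpa only [add_right_comm] using
    stmt_1_general hp0 hp1 fun n => ENNReal.ofReal (a (n + 1))
end

section
/- For all real numbers y and t with 0 ≤ y ≤ 1 and 1/2 < t < 1, one has (1 + y/(2t))^{1+t} − (1+y)^{−t}·(1 + (2t−1)y/(2t))^{1+t} − y/t ≥ 0. -/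
/-!
Fix `y` and `t` and replace `1 / (2 t)` by a variable weight `a ∈ [0, 1]`, that is, consider
`G a = (1 + a y) ^ (1 + t) - (1 + y) ^ (-t) * (1 + (1 - a) y) ^ (1 + t)`. Its derivative is
`(1 + t) y` times the sum of `(1 + a y) ^ t` and `(1 + y) ^ (-t) * (1 + (1 - a) y) ^ t`. Since
`(1 + a y) (1 + (1 - a) y) ≥ 1 + y`, these two summands have product at least `1`, hence sum at
least `2`. The derivative is thus at least `2 (1 + t) y`, and integrating from `G 0 = -y` gives
`G a ≥ 2 (1 + t) y a - y`, whose right-hand side is `y / t` at `a = 1 / (2 t)`.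
-/

/-- The difference of powers `(1 + a y) ^ (1 + t) - (1 + y) ^ (-t) * (1 + (1 - a) y) ^ (1 + t)`, as
a function of the weight `a`; the theorem bounds it from below at `a = 1 / (2 t)`. -/
noncomputable def powGap (t y a : ℝ) : ℝ :=
  (1 + a * y) ^ (1 + t) - (1 + y) ^ (-t) * (1 + (1 - a) * y) ^ (1 + t)

section

variable {t y a : ℝ}

lemma two_le_add_of_one_le_mul {u v : ℝ} (hu : 0 < u) (huv : 1 ≤ u * v) : 2 ≤ u + v := by
  nlinarith [sq_nonneg (u - 1)]

lemma one_add_mul_pos (hy : 0 < 1 + y) (ha : a ∈ Set.Icc 0 1) : 0 < 1 + a * y := by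
  rcases le_total 0 y with hy_nonneg | hy_nonpos
  · linarith [mul_nonneg ha.1 hy_nonneg]
  · linarith [mul_le_mul_of_nonpos_right ha.2 hy_nonpos]

lemma one_add_le_one_add_mul_mul_one_add_mul (ha : a ∈ Set.Icc 0 1) :
    1 + y ≤ (1 + a * y) * (1 + (1 - a) * y) := by
  have hweights : 0 ≤ a * (1 - a) * y ^ 2 :=
    mul_nonneg (mul_nonneg ha.1 (sub_nonneg.2 ha.2)) (sq_nonneg y)
  linarith

lemma two_le_rpow_add_rpow_neg_mul_rpow (ht : 0 ≤ t) (hy : 0 < 1 + y) (ha : a ∈ Set.Icc 0 1) :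
    2 ≤ (1 + a * y) ^ t + (1 + y) ^ (-t) * (1 + (1 - a) * y) ^ t := by
  have hleft : 0 < 1 + a * y := one_add_mul_pos hy ha
  have hright : 0 < 1 + (1 - a) * y :=
    one_add_mul_pos hy ⟨sub_nonneg.2 ha.2, sub_le_self 1 ha.1⟩
  refine two_le_add_of_one_le_mul (by positivity) ?_
  calc (1 : ℝ) = (1 + y) ^ (-t) * (1 + y) ^ t := by
        rw [← Real.rpow_add hy, neg_add_cancel, Real.rpow_zero]
    _ ≤ (1 + y) ^ (-t) * ((1 + a * y) * (1 + (1 - a) * y)) ^ t := by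
        gcongr
        exact one_add_le_one_add_mul_mul_one_add_mul ha
    _ = (1 + a * y) ^ t * ((1 + y) ^ (-t) * (1 + (1 - a) * y) ^ t) := by
        rw [Real.mul_rpow hleft.le hright.le]
        ring

lemma hasDerivAt_powGap (ht : 0 ≤ t) (y a : ℝ) :
    HasDerivAt (powGap t y)
      ((1 + t) * y * ((1 + a * y) ^ t + (1 + y) ^ (-t) * (1 + (1 - a) * y) ^ t)) a := by
  have hexp : 1 ≤ 1 + t := le_add_of_nonneg_right ht
  have hleft : HasDerivAt (fun b : ℝ ↦ 1 + b * y) y a := by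
    simpa using ((hasDerivAt_id a).mul_const y).const_add 1
  have hright : HasDerivAt (fun b : ℝ ↦ 1 + (1 - b) * y) (-y) a := by
    simpa using (((hasDerivAt_id a).const_sub 1).mul_const y).const_add 1
  refine ((hleft.rpow_const (.inr hexp)).sub
    ((hright.rpow_const (.inr hexp)).const_mul ((1 + y) ^ (-t)))).congr_deriv ?_
  rw [add_sub_cancel_left]
  ring

lemma powGap_zero (t : ℝ) (hy : 0 < 1 + y) : powGap t y 0 = -y := by
  have hcancel : (1 + y) ^ (-t) * (1 + y) ^ (1 + t) = 1 + y := by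
    rw [← Real.rpow_add hy, neg_add_cancel_comm_assoc, Real.rpow_one]
  simp [powGap, hcancel]

lemma le_powGap (ht : 0 ≤ t) (hy : 0 ≤ y) (ha : a ∈ Set.Icc 0 1) :
    2 * (1 + t) * y * a - y ≤ powGap t y a := by
  have hy_one : 0 < 1 + y := by positivity
  have hderiv : ∀ b ∈ interior (Set.Icc (0 : ℝ) 1), 2 * (1 + t) * y ≤ deriv (powGap t y) b := by
    intro b hb
    rw [(hasDerivAt_powGap ht y b).deriv, mul_assoc, mul_comm]
    gcongr
    exact two_le_rpow_add_rpow_neg_mul_rpow ht hy_one (interior_subset hb)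
  have hdiff : Differentiable ℝ (powGap t y) :=
    fun b ↦ (hasDerivAt_powGap ht y b).differentiableAt
  have hmean := (convex_Icc 0 1).mul_sub_le_image_sub_of_le_deriv hdiff.continuous.continuousOn
    hdiff.differentiableOn hderiv 0 (Set.left_mem_Icc.2 zero_le_one) a ha ha.1
  rw [powGap_zero t hy_one] at hmean
  linarith

end

theorem stmt_3_general (y t : ℝ) (hy : 0 ≤ y) (ht : 1 / 2 ≤ t) :
    0 ≤ (1 + y / (2 * t)) ^ (1 + t) -
      (1 + y) ^ (-t) * (1 + (2 * t - 1) * y / (2 * t)) ^ (1 + t) - y / t := by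
  have ht0 : 0 < t := by linarith
  have ha : 1 / (2 * t) ∈ Set.Icc (0 : ℝ) 1 :=
    ⟨by positivity, (div_le_one (by positivity)).2 (by linarith)⟩
  have hbound : 2 * (1 + t) * y * (1 / (2 * t)) - y = y / t := by
    field_simp
    ring
  have hleft : 1 / (2 * t) * y = y / (2 * t) := by ring
  have hright : (1 - 1 / (2 * t)) * y = (2 * t - 1) * y / (2 * t) := by field_simp
  have hgap := le_powGap ht0.le hy ha
  rw [hbound, powGap, hleft, hright] at hgap
  exact sub_nonneg.2 hgap

/-- Lemma 2.1: for `0 ≤ y ≤ 1` and `1/2 < t < 1`,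
`(1 + y/(2t))^{1+t} - (1+y)^{-t} (1 + (2t-1)y/(2t))^{1+t} - y/t ≥ 0`. -/
theorem stmt_3 (y t : ℝ) (hy0 : 0 ≤ y) (hy1 : y ≤ 1) (ht1 : 1 / 2 < t) (ht2 : t < 1) :
    0 ≤ (1 + y / (2 * t)) ^ (1 + t) -
      (1 + y) ^ (-t) * (1 + (2 * t - 1) * y / (2 * t)) ^ (1 + t) - y / t :=
  stmt_3_general y t hy0 ht1.le
end

section
/- For all real numbers x and t with 0 ≤ x ≤ 1 and 1/2 < t < 1, one has (1+2tx)^{−t−2}·(1+(2t−1)x)^{t−1}·(1+x)^{1−t} ≤ 1. -/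
theorem rpow_le_rpow_max_zero {a b : ℝ} (hb : 1 ≤ b) (hba : b ≤ a) (p : ℝ) :
    b ^ p ≤ a ^ max p 0 :=
  calc b ^ p ≤ b ^ max p 0 := Real.rpow_le_rpow_of_exponent_le hb (le_max_left p 0)
    _ ≤ a ^ max p 0 := Real.rpow_le_rpow (by linarith) hba (le_max_right p 0)

theorem rpow_mul_rpow_mul_rpow_le_one {a b c p q r : ℝ} (hb : 1 ≤ b) (hba : b ≤ a)
    (hc : 1 ≤ c) (hca : c ≤ a) (hpqr : r + max p 0 + max q 0 ≤ 0) :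
    a ^ r * b ^ p * c ^ q ≤ 1 := by
  have ha : 1 ≤ a := hb.trans hba
  have ha_pos : 0 < a := by linarith
  calc a ^ r * b ^ p * c ^ q
      ≤ a ^ r * a ^ max p 0 * a ^ max q 0 := by
        gcongr
        · exact rpow_le_rpow_max_zero hb hba p
        · exact rpow_le_rpow_max_zero hc hca q
    _ = a ^ (r + max p 0 + max q 0) := by rw [Real.rpow_add ha_pos, Real.rpow_add ha_pos]
    _ ≤ 1 := Real.rpow_le_one_of_one_le_of_nonpos ha hpqr

theorem stmt_4_general {x t : ℝ} (hx : 0 ≤ x) (ht : 1 / 2 ≤ t) :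
    (1 + 2 * t * x) ^ (-t - 2) * (1 + (2 * t - 1) * x) ^ (t - 1) * (1 + x) ^ (1 - t) ≤ 1 := by
  have hmid : 0 ≤ (2 * t - 1) * x := mul_nonneg (by linarith) hx
  have hexp : -t - 2 + max (t - 1) 0 + max (1 - t) 0 ≤ 0 := by
    rcases le_total t 1 with h | h
    · rw [max_eq_right (by linarith), max_eq_left (by linarith)]
      linarith
    · rw [max_eq_left (by linarith), max_eq_right (by linarith)]
      linarith
  exact rpow_mul_rpow_mul_rpow_le_one (by linarith) (by linarith) (by linarith) (by linarith) hexp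

/-- For `0 ≤ x ≤ 1` and `1/2 < t < 1`,
`(1+2tx)^{-t-2} (1+(2t-1)x)^{t-1} (1+x)^{1-t} ≤ 1`. -/
theorem stmt_4 (x t : ℝ) (hx0 : 0 ≤ x) (hx1 : x ≤ 1) (ht1 : 1 / 2 < t) (ht2 : t < 1) :
    (1 + 2 * t * x) ^ (-t - 2) * (1 + (2 * t - 1) * x) ^ (t - 1) * (1 + x) ^ (1 - t) ≤ 1 :=
  stmt_4_general hx0 ht1.le
end

section
/- Let p be a real number with p ≠ 0 and p < 1, and let q be defined by 1/p + 1/q = 1. Let (λ_i)_{i≥1} and (a_i)_{i≥1} be sequences of positive reals and set S_n = ∑_{i=1}^n λ_i a_i. Let (μ_i)_{i≥1} and (η_i)_{i≥1} be sequences of positive reals such that μ_i < η_i for all i when 0 < p < 1, and μ_i ≥ η_i for all i when p < 0. Then for every n ≥ 2, ∑_{i=2}^{n−1} ( μ_i − (μ_{i+1}^q − η_{i+1}^q)^{1/q} )·S_i^{1/p} + μ_n·S_n^{1/p} ≤ (μ_2^q − η_2^q)^{1/q}·λ_1^{1/p}·a_1^{1/p} + ∑_{i=2}^n η_i·λ_i^{1/p}·a_i^{1/p}.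 -/
/-!
Put `A = μ ^ q - η ^ q` and `B = η ^ q`, so that `A + B = μ ^ q`. Radon's inequality, which is
Jensen's inequality for the perspective `x * (u / x) ^ r` of a convex power, gives the reverse
Hölder inequality
`(A + B) ^ q⁻¹ * (x + y) ^ p⁻¹ ≤ A ^ q⁻¹ * x ^ p⁻¹ + B ^ q⁻¹ * y ^ p⁻¹`,
because one of the two exponents, which add up to `1`, is at least `1`. Taking `x = S k` and
`y = S (k + 1) - S k` bounds each term in terms of its predecessor, and these bounds telescope.
-/

open Finset

section ReverseHolder

theorem rpow_mul_rpow_eq_mul_div_rpow {u x r t : ℝ} (hrt : r + t = 1) (hu : 0 ≤ u) (hx : 0 < x) :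
    u ^ r * x ^ t = x * (u / x) ^ r := by
  rw [Real.div_rpow hu hx.le, eq_sub_of_add_eq' hrt, Real.rpow_sub hx, Real.rpow_one]
  ring

theorem sum_rpow_mul_sum_rpow_le_sum_rpow_mul_rpow {ι : Type*} {s : Finset ι} {u x : ι → ℝ}
    {r t : ℝ} (hr : 1 ≤ r) (hrt : r + t = 1) (hu : ∀ i ∈ s, 0 ≤ u i) (hx : ∀ i ∈ s, 0 < x i) :
    (∑ i ∈ s, u i) ^ r * (∑ i ∈ s, x i) ^ t ≤ ∑ i ∈ s, u i ^ r * x i ^ t := by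
  rcases s.eq_empty_or_nonempty with rfl | hs
  · simp [Real.zero_rpow (zero_lt_one.trans_le hr).ne']
  have hX : 0 < ∑ i ∈ s, x i := sum_pos hx hs
  have jensen := (convexOn_rpow hr).map_centerMass_le (fun i hi ↦ (hx i hi).le) hX
    (fun i hi ↦ Set.mem_Ici.2 (div_nonneg (hu i hi) (hx i hi).le))
  have hmean : ∑ i ∈ s, x i * (u i / x i) = ∑ i ∈ s, u i :=
    sum_congr rfl fun i hi ↦ mul_div_cancel₀ _ (hx i hi).ne'
  simp only [centerMass, smul_eq_mul, Function.comp_apply, hmean, inv_mul_eq_div] at jensen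
  calc (∑ i ∈ s, u i) ^ r * (∑ i ∈ s, x i) ^ t
      = (∑ i ∈ s, x i) * ((∑ i ∈ s, u i) / ∑ i ∈ s, x i) ^ r :=
        rpow_mul_rpow_eq_mul_div_rpow hrt (sum_nonneg hu) hX
    _ ≤ ∑ i ∈ s, x i * (u i / x i) ^ r := (le_div_iff₀' hX).1 jensen
    _ = ∑ i ∈ s, u i ^ r * x i ^ t :=
        sum_congr rfl fun i hi ↦ (rpow_mul_rpow_eq_mul_div_rpow hrt (hu i hi) (hx i hi)).symm

theorem add_rpow_mul_add_rpow_le {u v x y r t : ℝ} (hr : 1 ≤ r) (hrt : r + t = 1)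
    (hu : 0 ≤ u) (hv : 0 ≤ v) (hx : 0 < x) (hy : 0 < y) :
    (u + v) ^ r * (x + y) ^ t ≤ u ^ r * x ^ t + v ^ r * y ^ t := by
  simpa using sum_rpow_mul_sum_rpow_le_sum_rpow_mul_rpow (s := univ) (u := ![u, v])
    (x := ![x, y]) hr hrt (by simp [Fin.forall_fin_two, hu, hv])
    (by simp [Fin.forall_fin_two, hx, hy])

variable {p q x y m e : ℝ}

theorem mul_add_rpow_inv_le_of_neg (hp : p < 0) (hpq : p⁻¹ + q⁻¹ = 1) (hx : 0 < x) (hy : 0 < y)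
    (he : 0 ≤ e) (hem : e ≤ m) :
    m * (x + y) ^ p⁻¹ ≤ (m ^ q - e ^ q) ^ q⁻¹ * x ^ p⁻¹ + e * y ^ p⁻¹ := by
  have hq_inv : 1 ≤ q⁻¹ := by linarith [inv_lt_zero.2 hp]
  have hq : 0 < q := inv_pos.1 (by linarith)
  have holder := add_rpow_mul_add_rpow_le hq_inv ((add_comm _ _).trans hpq)
    (sub_nonneg.2 (Real.rpow_le_rpow he hem hq.le)) (Real.rpow_nonneg he q) hx hy
  rwa [sub_add_cancel, Real.rpow_rpow_inv (he.trans hem) hq.ne',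
    Real.rpow_rpow_inv he hq.ne'] at holder

theorem mul_add_rpow_inv_le_of_pos (hp : 0 < p) (hp1 : p < 1) (hpq : p⁻¹ + q⁻¹ = 1)
    (hx : 0 ≤ x) (hy : 0 ≤ y) (hm : 0 < m) (hme : m < e) :
    m * (x + y) ^ p⁻¹ ≤ (m ^ q - e ^ q) ^ q⁻¹ * x ^ p⁻¹ + e * y ^ p⁻¹ := by
  have hp_inv : 1 < p⁻¹ := (one_lt_inv₀ hp).2 hp1
  have hq : q < 0 := inv_lt_zero.1 (by linarith)
  have he : 0 < e := hm.trans hme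
  have holder := add_rpow_mul_add_rpow_le hp_inv.le hpq hx hy
    (sub_pos.2 (Real.rpow_lt_rpow_of_neg hm hme hq)) (Real.rpow_pos_of_pos he q)
  rw [sub_add_cancel, Real.rpow_rpow_inv hm.le hq.ne, Real.rpow_rpow_inv he.le hq.ne] at holder
  simpa only [mul_comm] using holder

theorem mul_add_rpow_inv_le (hp0 : p ≠ 0) (hp1 : p < 1) (hpq : p⁻¹ + q⁻¹ = 1)
    (hx : 0 < x) (hy : 0 < y) (hm : 0 < m) (he : 0 < e)
    (hme : 0 < p → m < e) (hem : p < 0 → e ≤ m) :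
    m * (x + y) ^ p⁻¹ ≤ (m ^ q - e ^ q) ^ q⁻¹ * x ^ p⁻¹ + e * y ^ p⁻¹ := by
  rcases hp0.lt_or_gt with hp | hp
  · exact mul_add_rpow_inv_le_of_neg hp hpq hx hy he.le (hem hp)
  · exact mul_add_rpow_inv_le_of_pos hp hp1 hpq hx.le hy.le hm (hme hp)

end ReverseHolder

theorem sum_Ico_sub_mul_add_le {R : Type*} [CommRing R] [PartialOrder R] [IsOrderedAddMonoid R]
    {m b c u : ℕ → R} {l n : ℕ} (hln : l < n)
    (hstep : ∀ k ∈ Ico l n, m (k + 1) * u (k + 1) ≤ b (k + 1) * u k + c (k + 1)) :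
    ∑ i ∈ Ico (l + 1) n, (m i - b (i + 1)) * u i + m n * u n ≤
      b (l + 1) * u l + ∑ i ∈ Icc (l + 1) n, c i := by
  induction n, hln using Nat.le_induction with
  | base => simpa using hstep l (by simp)
  | succ k hk ih =>
    rw [sum_Ico_succ_top hk, sum_Icc_succ_top (hk.trans k.le_succ)]
    calc ∑ i ∈ Ico (l + 1) k, (m i - b (i + 1)) * u i + (m k - b (k + 1)) * u k
          + m (k + 1) * u (k + 1)
        ≤ ∑ i ∈ Ico (l + 1) k, (m i - b (i + 1)) * u i + (m k - b (k + 1)) * u k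
          + (b (k + 1) * u k + c (k + 1)) :=
        add_le_add le_rfl (hstep k (mem_Ico.2 ⟨Nat.le_of_succ_le hk, k.lt_succ_self⟩))
      _ = (∑ i ∈ Ico (l + 1) k, (m i - b (i + 1)) * u i + m k * u k) + c (k + 1) := by ring
      _ ≤ (b (l + 1) * u l + ∑ i ∈ Icc (l + 1) k, c i) + c (k + 1) :=
        add_le_add (ih fun j hj ↦ hstep j (Ico_subset_Ico_right k.le_succ hj)) le_rfl
      _ = b (l + 1) * u l + (∑ i ∈ Icc (l + 1) k, c i + c (k + 1)) := add_assoc _ _ _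

/-- Lemma 2.4 of [G]: for `p ≠ 0`, `p < 1`, `1/p + 1/q = 1`, positive sequences
`λ, a, μ, η` with `μ_i < η_i` when `0 < p < 1` and `μ_i ≥ η_i` when `p < 0`,
and `S_n = ∑_{i=1}^n λ_i a_i`, for every `n ≥ 2`:
`∑_{i=2}^{n-1} (μ_i - (μ_{i+1}^q - η_{i+1}^q)^{1/q}) S_i^{1/p} + μ_n S_n^{1/p}
  ≤ (μ_2^q - η_2^q)^{1/q} λ_1^{1/p} a_1^{1/p} + ∑_{i=2}^n η_i λ_i^{1/p} a_i^{1/p}`. -/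
theorem stmt_5 (p q : ℝ) (hp0 : p ≠ 0) (hp1 : p < 1) (hq : 1 / p + 1 / q = 1)
    (lam a μ η : ℕ → ℝ)
    (hlam : ∀ i, 1 ≤ i → 0 < lam i) (ha : ∀ i, 1 ≤ i → 0 < a i)
    (hμ : ∀ i, 1 ≤ i → 0 < μ i) (hη : ∀ i, 1 ≤ i → 0 < η i)
    (hcase1 : 0 < p → ∀ i, 1 ≤ i → μ i < η i)
    (hcase2 : p < 0 → ∀ i, 1 ≤ i → η i ≤ μ i)
    (S : ℕ → ℝ) (hS : ∀ n, S n = ∑ i ∈ Finset.Icc 1 n, lam i * a i)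
    (n : ℕ) (hn : 2 ≤ n) :
    (∑ i ∈ Finset.Icc 2 (n - 1),
        (μ i - (μ (i + 1) ^ q - η (i + 1) ^ q) ^ (1 / q)) * S i ^ (1 / p)) +
      μ n * S n ^ (1 / p) ≤
    (μ 2 ^ q - η 2 ^ q) ^ (1 / q) * lam 1 ^ (1 / p) * a 1 ^ (1 / p) +
      ∑ i ∈ Finset.Icc 2 n, η i * lam i ^ (1 / p) * a i ^ (1 / p) := by
  simp only [one_div] at hq ⊢
  have hterm_pos : ∀ i, 1 ≤ i → 0 < lam i * a i := fun i hi ↦ mul_pos (hlam i hi) (ha i hi)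
  have hterm_rpow : ∀ c i, 1 ≤ i →
      c * (lam i * a i) ^ p⁻¹ = c * lam i ^ p⁻¹ * a i ^ p⁻¹ := fun c i hi ↦ by
    rw [Real.mul_rpow (hlam i hi).le (ha i hi).le, mul_assoc]
  have hS_one : S 1 = lam 1 * a 1 := by simp [hS]
  have hS_succ : ∀ k, S (k + 1) = S k + lam (k + 1) * a (k + 1) := fun k ↦ by
    rw [hS, hS, sum_Icc_succ_top (by omega)]
  have hS_pos : ∀ k, 1 ≤ k → 0 < S k := fun k hk ↦ by
    rw [hS]
    exact sum_pos (fun i hi ↦ hterm_pos i (mem_Icc.1 hi).1) (nonempty_Icc.2 hk)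
  have hstep : ∀ k, 1 ≤ k → μ (k + 1) * S (k + 1) ^ p⁻¹ ≤
      (μ (k + 1) ^ q - η (k + 1) ^ q) ^ q⁻¹ * S k ^ p⁻¹ +
        η (k + 1) * lam (k + 1) ^ p⁻¹ * a (k + 1) ^ p⁻¹ := fun k hk ↦ by
    have hk' : 1 ≤ k + 1 := k.succ_pos
    rw [hS_succ, ← hterm_rpow _ _ hk']
    exact mul_add_rpow_inv_le hp0 hp1 hq (hS_pos k hk) (hterm_pos _ hk') (hμ _ hk') (hη _ hk')
      (hcase1 · _ hk') (hcase2 · _ hk')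
  rw [Icc_sub_one_right_eq_Ico_of_not_isMin (not_isMin_of_lt hn), ← hterm_rpow _ 1 le_rfl, ← hS_one]
  exact sum_Ico_sub_mul_add_le (b := fun i ↦ (μ i ^ q - η i ^ q) ^ q⁻¹) hn
    fun k hk ↦ hstep k (mem_Ico.1 hk).1
end

section
/- Let p < 0 be a real number, let N ≥ 1 be an integer, let λ_1, …, λ_{N+1} and a_1, …, a_N be positive reals, and set S_i = ∑_{k=1}^i λ_k a_k. Let ν_1 = 0 and let ν_2, …, ν_{N+1} be arbitrary nonnegative reals. Then ∑_{i=1}^{N} ( (1+ν_i)^{1−p}/λ_i^p − ν_{i+1}^{1−p}/λ_{i+1}^p )·S_i^p ≤ ∑_{i=1}^N a_i^p. -/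
/-!
With `T i = ν i ^ (1 - p) / lam i ^ p * S (i - 1) ^ p`, Radon's inequality applied to
`(1 + ν i) ^ (1 - p) * (lam i * a i + S (i - 1)) ^ p` bounds the `i`-th term on the left by
`a i ^ p + T i - T (i + 1)`. These bounds telescope, `T 1 = 0` because `ν 1 = 0`, and
`T (N + 1) ≥ 0`.
-/

theorem mul_div_rpow_one_sub {p x u : ℝ} (hp : p < 1) (hx : 0 ≤ x) (hu : 0 ≤ u)
    (hxu : u = 0 → x = 0) : u * (x / u) ^ (1 - p) = x ^ (1 - p) * u ^ p := by
  rcases hu.eq_or_lt with rfl | hu_pos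
  · simp [hxu rfl, Real.zero_rpow (sub_pos.2 hp).ne']
  · rw [Real.div_rpow hx hu, Real.rpow_sub hu_pos, Real.rpow_one]
    have hup : u ^ p ≠ 0 := (Real.rpow_pos_of_pos hu_pos p).ne'
    field_simp

/-- Radon's inequality. Where `u i = 0`, the condition `x i = 0` makes the summand `0`
whatever the value of `0 ^ p`. -/
theorem sum_rpow_one_sub_mul_sum_rpow_le {ι : Type*} {s : Finset ι} {p : ℝ} {x u : ι → ℝ}
    (hp : p ≤ 0) (hx : ∀ i ∈ s, 0 ≤ x i) (hu : ∀ i ∈ s, 0 ≤ u i)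
    (hxu : ∀ i ∈ s, u i = 0 → x i = 0) :
    (∑ i ∈ s, x i) ^ (1 - p) * (∑ i ∈ s, u i) ^ p ≤ ∑ i ∈ s, x i ^ (1 - p) * u i ^ p := by
  have hp_lt_one : p < 1 := hp.trans_lt one_pos
  set U := ∑ i ∈ s, u i
  have hU_nonneg : 0 ≤ U := Finset.sum_nonneg hu
  have hXU : U = 0 → ∑ i ∈ s, x i = 0 := fun hU_zero ↦
    Finset.sum_eq_zero fun i hi ↦ hxu i hi ((Finset.sum_eq_zero_iff_of_nonneg hu).1 hU_zero i hi)
  rw [← mul_div_rpow_one_sub hp_lt_one (Finset.sum_nonneg hx) hU_nonneg hXU]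
  rcases hU_nonneg.eq_or_lt with hU_zero | hU_pos
  · rw [← hU_zero, zero_mul]
    exact Finset.sum_nonneg fun i hi ↦
      mul_nonneg (Real.rpow_nonneg (hx i hi) _) (Real.rpow_nonneg (hu i hi) _)
  have jensen : (∑ i ∈ s, u i / U * (x i / u i)) ^ (1 - p) ≤
      ∑ i ∈ s, u i / U * (x i / u i) ^ (1 - p) :=
    Real.rpow_arith_mean_le_arith_mean_rpow s _ _ (fun i hi ↦ div_nonneg (hu i hi) hU_nonneg)
      (by rw [← Finset.sum_div, div_self hU_pos.ne'])
      (fun i hi ↦ div_nonneg (hx i hi) (hu i hi)) (by linarith)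
  have mean_eq : ∑ i ∈ s, u i / U * (x i / u i) = (∑ i ∈ s, x i) / U := by
    rw [Finset.sum_div]
    refine Finset.sum_congr rfl fun i hi ↦ ?_
    rw [div_mul_eq_mul_div, mul_div_cancel_of_imp' (hxu i hi)]
  calc U * ((∑ i ∈ s, x i) / U) ^ (1 - p)
      ≤ U * ∑ i ∈ s, u i / U * (x i / u i) ^ (1 - p) := by rw [← mean_eq]; gcongr
    _ = ∑ i ∈ s, u i * (x i / u i) ^ (1 - p) := by
        rw [Finset.mul_sum]
        exact Finset.sum_congr rfl fun i _ ↦ by rw [← mul_assoc, mul_div_cancel₀ _ hU_pos.ne']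
    _ = ∑ i ∈ s, x i ^ (1 - p) * u i ^ p :=
        Finset.sum_congr rfl fun i hi ↦
          mul_div_rpow_one_sub hp_lt_one (hx i hi) (hu i hi) (hxu i hi)

theorem add_rpow_one_sub_mul_add_rpow_le {p x y u v : ℝ} (hp : p ≤ 0) (hx : 0 ≤ x) (hy : 0 ≤ y)
    (hu : 0 ≤ u) (hv : 0 ≤ v) (hxu : u = 0 → x = 0) (hyv : v = 0 → y = 0) :
    (x + y) ^ (1 - p) * (u + v) ^ p ≤ x ^ (1 - p) * u ^ p + y ^ (1 - p) * v ^ p := by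
  simpa using sum_rpow_one_sub_mul_sum_rpow_le (s := Finset.univ) (x := ![x, y]) (u := ![u, v]) hp
    (by simp [hx, hy]) (by simp [hu, hv]) (by simpa using ⟨hxu, hyv⟩)

theorem one_add_rpow_div_mul_add_rpow_le {p l a n s : ℝ} (hp : p ≤ 0) (hl : 0 < l) (ha : 0 < a)
    (hn : 0 ≤ n) (hs : 0 ≤ s) (hns : s = 0 → n = 0) :
    (1 + n) ^ (1 - p) / l ^ p * (l * a + s) ^ p ≤ a ^ p + n ^ (1 - p) / l ^ p * s ^ p := by
  have hla : 0 < l * a := mul_pos hl ha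
  have radon : (1 + n) ^ (1 - p) * (l * a + s) ^ p ≤ l ^ p * a ^ p + n ^ (1 - p) * s ^ p := by
    simpa [Real.mul_rpow hl.le ha.le] using add_rpow_one_sub_mul_add_rpow_le hp zero_le_one hn
      hla.le hs (fun h ↦ absurd h hla.ne') hns
  calc (1 + n) ^ (1 - p) / l ^ p * (l * a + s) ^ p
      = (1 + n) ^ (1 - p) * (l * a + s) ^ p / l ^ p := div_mul_eq_mul_div ..
    _ ≤ (l ^ p * a ^ p + n ^ (1 - p) * s ^ p) / l ^ p := by gcongr
    _ = a ^ p + n ^ (1 - p) / l ^ p * s ^ p := by field_simp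

theorem sum_Icc_le_sum_Icc_of_le_sub_sub {M : Type*} [AddCommGroup M] [PartialOrder M]
    [IsOrderedAddMonoid M] {f g T : ℕ → M} {m n : ℕ} (hmn : m ≤ n)
    (hT : T m ≤ T (n + 1)) (hfg : ∀ i ∈ Finset.Icc m n, f i ≤ g i - (T (i + 1) - T i)) :
    ∑ i ∈ Finset.Icc m n, f i ≤ ∑ i ∈ Finset.Icc m n, g i :=
  calc ∑ i ∈ Finset.Icc m n, f i
      ≤ ∑ i ∈ Finset.Icc m n, (g i - (T (i + 1) - T i)) := Finset.sum_le_sum hfg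
    _ = ∑ i ∈ Finset.Icc m n, g i - (T (n + 1) - T m) := by
        rw [Finset.sum_sub_distrib, Finset.sum_Icc_sub hmn]
    _ ≤ ∑ i ∈ Finset.Icc m n, g i := sub_le_self _ (sub_nonneg.2 hT)

/-- Inequality (3.2): for `p < 0`, `N ≥ 1`, positive `λ_1, …, λ_{N+1}`,
positive `a_1, …, a_N`, `S_i = ∑_{k=1}^i λ_k a_k`, `ν_1 = 0` and
nonnegative `ν_2, …, ν_{N+1}`:
`∑_{i=1}^N ((1+ν_i)^{1-p}/λ_i^p - ν_{i+1}^{1-p}/λ_{i+1}^p) S_i^p ≤ ∑_{i=1}^N a_i^p`. -/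
theorem stmt_6 (p : ℝ) (hp : p < 0) (N : ℕ) (hN : 1 ≤ N)
    (lam a ν : ℕ → ℝ)
    (hlam : ∀ i, 1 ≤ i → i ≤ N + 1 → 0 < lam i)
    (ha : ∀ i, 1 ≤ i → i ≤ N → 0 < a i)
    (hν1 : ν 1 = 0)
    (hν : ∀ i, 2 ≤ i → i ≤ N + 1 → 0 ≤ ν i)
    (S : ℕ → ℝ) (hS : ∀ i, S i = ∑ k ∈ Finset.Icc 1 i, lam k * a k) :
    ∑ i ∈ Finset.Icc 1 N,
        ((1 + ν i) ^ (1 - p) / lam i ^ p - ν (i + 1) ^ (1 - p) / lam (i + 1) ^ p) * S i ^ p ≤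
      ∑ i ∈ Finset.Icc 1 N, a i ^ p := by
  have hS_pos : ∀ i, 1 ≤ i → i ≤ N → 0 < S i := fun i hi hiN ↦ by
    refine hS i ▸ Finset.sum_pos (fun k hk ↦ ?_) (Finset.nonempty_Icc.2 hi)
    obtain ⟨hk1, hki⟩ := Finset.mem_Icc.1 hk
    exact mul_pos (hlam k hk1 (by lia)) (ha k hk1 (by lia))
  let T : ℕ → ℝ := fun i ↦ ν i ^ (1 - p) / lam i ^ p * S (i - 1) ^ p
  have hT_one : T 1 = 0 := by simp [T, hν1, Real.zero_rpow (show 1 - p ≠ 0 by linarith)]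
  have hT_last : 0 ≤ T (N + 1) :=
    mul_nonneg (div_nonneg (Real.rpow_nonneg (hν _ (by lia) le_rfl) _)
      (Real.rpow_nonneg (hlam _ (by lia) le_rfl).le _)) (Real.rpow_nonneg (hS_pos N hN le_rfl).le _)
  refine sum_Icc_le_sum_Icc_of_le_sub_sub (T := T) hN (hT_one.trans_le hT_last) fun i hi ↦ ?_
  obtain ⟨hi1, hiN⟩ := Finset.mem_Icc.1 hi
  have hS_succ : S i = lam i * a i + S (i - 1) := by
    obtain ⟨j, rfl⟩ := Nat.exists_eq_add_of_le' hi1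
    rw [hS, hS, Finset.sum_Icc_succ_top hi1, add_comm, Nat.add_sub_cancel]
  obtain ⟨hν_nonneg, hS_nonneg, hν_of_S⟩ :
      0 ≤ ν i ∧ 0 ≤ S (i - 1) ∧ (S (i - 1) = 0 → ν i = 0) := by
    rcases hi1.eq_or_lt with rfl | hi2
    · simp [hν1, hS]
    · have hS_prev := hS_pos (i - 1) (by lia) (by lia)
      exact ⟨hν i hi2 (by lia), hS_prev.le, fun h ↦ absurd h hS_prev.ne'⟩
  have step := one_add_rpow_div_mul_add_rpow_le hp.le (hlam i hi1 (by lia)) (ha i hi1 hiN)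
    hν_nonneg hS_nonneg hν_of_S
  rw [← hS_succ] at step
  simp only [T, Nat.add_sub_cancel, sub_mul]
  linarith
end

section
/- Let 0 < p < 1 and let α be a real number with α < 1/p. Let f : (0,∞) → [0,∞) be measurable, and suppose that F(x) := ∫_x^∞ f(t)·t^{α−1} dt is finite and strictly positive for every x > 0, and that ∫_0^∞ (F(x)/x^α)^p dx and ∫_0^∞ (F(x)/x^α)^{p−1} f(x) dx are both finite. Then ∫_0^∞ ( x^{−α}·∫_x^∞ f(t)·t^{α−1} dt )^p dx = (p/(1−αp)) · ∫_0^∞ ( x^{−α}·∫_x^∞ f(t)·t^{α−1} dt )^{p−1} · f(x) dx. -/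
open MeasureTheory

/-!
Write `T x = x ^ (-α) * ∫ t in Ioi x, f t * t ^ (α - 1)`. Then `T` is locally absolutely continuous
on `(0, ∞)` and `x * T' x = -(α * T x + f x)` almost everywhere, so `u = T ^ p` satisfies
`x * u' x = -(α * p * T x ^ p + p * T x ^ (p - 1) * f x)`. Integrating by parts,
`∫ u = -∫ x * u' x`, which is the claim. The boundary terms vanish: `x * u x` has a limit at `0`
and at `∞` because its derivative is integrable, and a nonzero limit would make `x⁻¹` integrable
there, since `u` is.
-/

open Set Filter Asymptotics
open scoped Topology NNReal

section AbsolutelyContinuous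

variable {X Y : Type*} [PseudoMetricSpace X] [PseudoMetricSpace Y] {a b : ℝ}

theorem absolutelyContinuousOnInterval_of_dist_le {f : ℝ → X} {g : ℝ → Y} {K : ℝ≥0}
    (hf : AbsolutelyContinuousOnInterval f a b)
    (hgf : ∀ x ∈ uIcc a b, ∀ y ∈ uIcc a b, dist (g x) (g y) ≤ K * dist (f x) (f y)) :
    AbsolutelyContinuousOnInterval g a b := by
  rw [absolutelyContinuousOnInterval_iff] at hf ⊢
  intro ε hε
  obtain ⟨δ, hδ, hfδ⟩ := hf (ε / (K + 1)) (by positivity)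
  refine ⟨δ, hδ, fun E hE hEδ => ?_⟩
  calc ∑ i ∈ Finset.range E.1, dist (g (E.2 i).1) (g (E.2 i).2)
      ≤ ∑ i ∈ Finset.range E.1, K * dist (f (E.2 i).1) (f (E.2 i).2) :=
        Finset.sum_le_sum fun i hi => hgf _ (hE.1 i hi).1 _ (hE.1 i hi).2
    _ = K * ∑ i ∈ Finset.range E.1, dist (f (E.2 i).1) (f (E.2 i).2) := by rw [Finset.mul_sum]
    _ ≤ K * (ε / (K + 1)) := by gcongr; exact (hfδ E hE hEδ).le
    _ < (K + 1) * (ε / (K + 1)) := by gcongr; exact lt_add_one _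
    _ = ε := by field_simp

theorem absolutelyContinuousOnInterval_comp_of_contDiffOn {E : Type*} [NormedAddCommGroup E]
    [NormedSpace ℝ E] {f : ℝ → ℝ} {g : ℝ → E} (hg : ContDiffOn ℝ 1 g (f '' uIcc a b))
    (hf : AbsolutelyContinuousOnInterval f a b) :
    AbsolutelyContinuousOnInterval (fun x => g (f x)) a b := by
  have image_convex : Convex ℝ (f '' uIcc a b) :=
    (isPreconnected_uIcc.image f hf.continuousOn).ordConnected.convex
  have image_compact : IsCompact (f '' uIcc a b) :=
    isCompact_uIcc.image_of_continuousOn hf.continuousOn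
  obtain ⟨K, hK⟩ := hg.exists_lipschitzOnWith one_ne_zero image_convex image_compact
  exact absolutelyContinuousOnInterval_of_dist_le hf fun x hx y hy =>
    hK.dist_le_mul _ (mem_image_of_mem f hx) _ (mem_image_of_mem f hy)

theorem absolutelyContinuousOnInterval_rpow_const {f : ℝ → ℝ} (p : ℝ)
    (hf : AbsolutelyContinuousOnInterval f a b) (hf_ne : ∀ x ∈ uIcc a b, f x ≠ 0) :
    AbsolutelyContinuousOnInterval (fun x => f x ^ p) a b := by
  refine absolutelyContinuousOnInterval_comp_of_contDiffOn (g := fun y => y ^ p) ?_ hf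
  rintro _ ⟨x, hx, rfl⟩
  exact (Real.contDiffAt_rpow_const_of_ne (hf_ne x hx)).contDiffWithinAt

end AbsolutelyContinuous

section TailIntegral

variable {E : Type*} [NormedAddCommGroup E] [NormedSpace ℝ E]

theorem integral_Ioi_eq_sub_intervalIntegral {h : ℝ → E} {a x : ℝ} (hh : IntegrableOn h (Ioi a))
    (hax : a ≤ x) : ∫ t in Ioi x, h t = (∫ t in Ioi a, h t) - ∫ t in a..x, h t :=
  eq_sub_of_add_eq' <|
    intervalIntegral.integral_interval_add_Ioi hh (hh.mono_set (Ioi_subset_Ioi hax))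

theorem absolutelyContinuousOnInterval_integral_Ioi {h : ℝ → ℝ} {a b : ℝ} (hab : a ≤ b)
    (hh : IntegrableOn h (Ioi a)) :
    AbsolutelyContinuousOnInterval (fun x => ∫ t in Ioi x, h t) a b := by
  have hh_ab : IntervalIntegrable h volume a b :=
    (intervalIntegrable_iff_integrableOn_Ioc_of_le hab).2 (hh.mono_set Ioc_subset_Ioi_self)
  refine absolutelyContinuousOnInterval_of_dist_le (K := 1)
    (hh_ab.absolutelyContinuousOnInterval_intervalIntegral left_mem_uIcc) fun x hx y hy => ?_
  rw [uIcc_of_le hab] at hx hy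
  rw [integral_Ioi_eq_sub_intervalIntegral hh hx.1, integral_Ioi_eq_sub_intervalIntegral hh hy.1,
    dist_sub_left, NNReal.coe_one, one_mul]

theorem ae_hasDerivAt_integral_Ioi [CompleteSpace E] {h : ℝ → E} {c : ℝ}
    (hh : ∀ x ∈ Ioi c, IntegrableOn h (Ioi x)) :
    ∀ᵐ x, x ∈ Ioi c → HasDerivAt (fun y => ∫ t in Ioi y, h t) (-h x) x := by
  refine ae_of_mem_of_ae_of_mem_inter_Ioo fun a b ha _ hab => ?_
  have hh_ab : IntervalIntegrable h volume a b :=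
    (intervalIntegrable_iff_integrableOn_Ioc_of_le hab.le).2
      ((hh a ha).mono_set Ioc_subset_Ioi_self)
  filter_upwards [hh_ab.ae_hasDerivAt_integral] with x hx hx_mem
  have hx_Icc : x ∈ uIcc a b := Ioo_subset_Icc_self.trans Icc_subset_uIcc hx_mem.2
  refine ((hx hx_Icc a left_mem_uIcc).const_sub (∫ t in Ioi a, h t)).congr_of_eventuallyEq ?_
  filter_upwards [Ioi_mem_nhds hx_mem.2.1] with y hy
  exact integral_Ioi_eq_sub_intervalIntegral (hh a ha) (le_of_lt hy)

end TailIntegral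

section BoundaryTerms

variable {E : Type*} [NormedAddCommGroup E] [NormedSpace ℝ E]

theorem eq_zero_of_tendsto_of_integrableAtFilter_smul {Ω : Type*} [MeasurableSpace Ω]
    {μ : Measure Ω} {l : Filter Ω} [l.IsMeasurablyGenerated] {g : Ω → ℝ} {G : Ω → E} {L : E}
    (hG : Tendsto G l (𝓝 L)) (hgm : StronglyMeasurableAtFilter g l μ)
    (hg : ¬IntegrableAtFilter g l μ) (hgG : IntegrableAtFilter (fun x => g x • G x) l μ) :
    L = 0 := by
  by_contra hL
  have one_isBigO : (fun _ => (1 : ℝ)) =O[l] G :=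
    (isBigO_const_const 1 hL l).trans ((isEquivalent_const_iff_tendsto hL).2 hG).isBigO_symm
  have g_isBigO : g =O[l] fun x => g x • G x := by
    simpa only [smul_eq_mul, mul_one] using (isBigO_refl g l).smul one_isBigO
  exact hg (g_isBigO.integrableAtFilter hgm hgG)

theorem not_integrableAtFilter_inv_atTop :
    ¬IntegrableAtFilter (fun x : ℝ => x⁻¹) atTop := by
  simp_rw [← Real.rpow_neg_one, integrableAtFilter_rpow_atTop_iff, lt_irrefl, not_false_eq_true]

theorem not_integrableAtFilter_inv_nhdsGT_zero :
    ¬IntegrableAtFilter (fun x : ℝ => x⁻¹) (𝓝[>] 0) := by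
  rintro ⟨s, hs, hs_int⟩
  obtain ⟨c, hc, hcs⟩ := mem_nhdsGT_iff_exists_Ioc_subset.1 hs
  have inv_int : IntervalIntegrable (fun x : ℝ => x⁻¹) volume 0 c :=
    (intervalIntegrable_iff_integrableOn_Ioc_of_le (le_of_lt hc)).2 (hs_int.mono_set hcs)
  rcases intervalIntegrable_inv_iff.1 inv_int with h0c | h0
  · exact hc.ne h0c
  · exact h0 left_mem_uIcc

theorem tendsto_atTop_of_intervalIntegral_eq_sub {G H : ℝ → E} {c : ℝ}
    (hH : IntegrableOn H (Ioi c)) (hGH : ∀ x ∈ Ioi c, ∫ t in c..x, H t = G x - G c) :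
    Tendsto G atTop (𝓝 (G c + ∫ t in Ioi c, H t)) := by
  refine ((intervalIntegral_tendsto_integral_Ioi c hH tendsto_id).const_add (G c)).congr' ?_
  filter_upwards [Ioi_mem_atTop c] with x hx
  rw [id, hGH x hx, add_sub_cancel]

theorem tendsto_nhdsGT_of_intervalIntegral_eq_sub {G H : ℝ → E} {a b : ℝ} (hab : a < b)
    (hH : IntervalIntegrable H volume a b)
    (hGH : ∀ x ∈ Ioo a b, ∫ t in x..b, H t = G b - G x) :
    Tendsto G (𝓝[>] a) (𝓝 (G b - ∫ t in a..b, H t)) := by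
  have primitive_cont : ContinuousOn (fun x => ∫ t in x..b, H t) (uIcc a b) :=
    intervalIntegral.continuousOn_primitive_interval_left (by
      rwa [uIcc_of_le hab.le, integrableOn_Icc_iff_integrableOn_Ioc,
        ← intervalIntegrable_iff_integrableOn_Ioc_of_le hab.le])
  have primitive_tendsto : Tendsto (fun x => ∫ t in x..b, H t) (𝓝[>] a) (𝓝 (∫ t in a..b, H t)) :=
    (primitive_cont a left_mem_uIcc).mono_left <| nhdsWithin_le_of_mem <| by
      rw [uIcc_of_le hab.le]
      exact Icc_mem_nhdsGT hab
  refine (primitive_tendsto.const_sub (G b)).congr' ?_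
  filter_upwards [Ioo_mem_nhdsGT hab] with x hx
  rw [hGH x hx, sub_sub_cancel]

theorem integral_Ioi_eq_neg_integral_mul_deriv {u : ℝ → ℝ}
    (hu : ∀ a b, 0 < a → a ≤ b → AbsolutelyContinuousOnInterval u a b)
    (hu_int : IntegrableOn u (Ioi 0))
    (hu'_int : IntegrableOn (fun x => x * deriv u x) (Ioi 0)) :
    ∫ x in Ioi 0, u x = -∫ x in Ioi 0, x * deriv u x := by
  set G : ℝ → ℝ := fun x => x * u x
  set H : ℝ → ℝ := fun x => u x + x * deriv u x
  have H_int : IntegrableOn H (Ioi 0) := hu_int.add hu'_int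
  have H_int_Ioi_one : IntegrableOn H (Ioi 1) := H_int.mono_set (Ioi_subset_Ioi zero_le_one)
  have integral_H : ∀ a b, 0 < a → a ≤ b → ∫ x in a..b, H x = G b - G a := fun a b ha hab => by
    have id_ac : AbsolutelyContinuousOnInterval (fun x : ℝ => x) a b :=
      contDiffOn_id.absolutelyContinuousOnInterval
    simpa only [deriv_id'', one_mul] using id_ac.integral_deriv_mul_eq_sub (hu a b ha hab)
  have tendsto_top : Tendsto G atTop (𝓝 (G 1 + ∫ x in Ioi 1, H x)) :=
    tendsto_atTop_of_intervalIntegral_eq_sub H_int_Ioi_one fun x hx =>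
      integral_H 1 x one_pos (le_of_lt hx)
  have tendsto_zero : Tendsto G (𝓝[>] 0) (𝓝 (G 1 - ∫ x in 0..1, H x)) :=
    tendsto_nhdsGT_of_intervalIntegral_eq_sub one_pos
      ((intervalIntegrable_iff_integrableOn_Ioc_of_le zero_le_one).2
        (H_int.mono_set Ioc_subset_Ioi_self))
      fun x hx => integral_H x 1 hx.1 hx.2.le
  have inv_smul_G_int : IntegrableOn (fun x => x⁻¹ • G x) (Ioi 0) :=
    hu_int.congr_fun (fun x hx => (inv_mul_cancel_left₀ (ne_of_gt hx) (u x)).symm)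
      measurableSet_Ioi
  have inv_meas (l : Filter ℝ) : StronglyMeasurableAtFilter (fun x : ℝ => x⁻¹) l :=
    measurable_inv.stronglyMeasurable.stronglyMeasurableAtFilter
  have limit_top_eq_zero : G 1 + ∫ x in Ioi 1, H x = 0 :=
    eq_zero_of_tendsto_of_integrableAtFilter_smul tendsto_top (inv_meas _)
      not_integrableAtFilter_inv_atTop ⟨Ioi 0, Ioi_mem_atTop 0, inv_smul_G_int⟩
  have limit_zero_eq_zero : G 1 - ∫ x in 0..1, H x = 0 :=
    eq_zero_of_tendsto_of_integrableAtFilter_smul tendsto_zero (inv_meas _)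
      not_integrableAtFilter_inv_nhdsGT_zero ⟨Ioi 0, self_mem_nhdsWithin, inv_smul_G_int⟩
  have split_H := intervalIntegral.integral_interval_add_Ioi H_int H_int_Ioi_one
  have add_H : ∫ x in Ioi 0, H x = (∫ x in Ioi 0, u x) + ∫ x in Ioi 0, x * deriv u x :=
    integral_add hu_int hu'_int
  linarith

end BoundaryTerms

section AdjointHardy

/-- The weighted adjoint Hardy operator `f ↦ x^{-α} ∫_x^∞ f(t) t^{α-1} dt` on functions on `(0, ∞)`,
encoded as a function on all of `ℝ` of which only the values at `x > 0` matter. -/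
noncomputable def adjointHardy (α : ℝ) (f : ℝ → ℝ) (x : ℝ) : ℝ :=
  x ^ (-α) * ∫ t in Ioi x, f t * t ^ (α - 1)

variable {α : ℝ} {f : ℝ → ℝ}

theorem absolutelyContinuousOnInterval_adjointHardy {a b : ℝ} (ha : 0 < a) (hab : a ≤ b)
    (hf : IntegrableOn (fun t => f t * t ^ (α - 1)) (Ioi a)) :
    AbsolutelyContinuousOnInterval (adjointHardy α f) a b := by
  have rpow_ac : AbsolutelyContinuousOnInterval (fun x : ℝ => x ^ (-α)) a b :=
    absolutelyContinuousOnInterval_rpow_const (-α) contDiffOn_id.absolutelyContinuousOnInterval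
      fun x hx => (ha.trans_le (uIcc_of_le hab ▸ hx).1).ne'
  exact rpow_ac.fun_mul (absolutelyContinuousOnInterval_integral_Ioi hab hf)

theorem ae_hasDerivAt_adjointHardy
    (hf : ∀ x ∈ Ioi (0 : ℝ), IntegrableOn (fun t => f t * t ^ (α - 1)) (Ioi x)) :
    ∀ᵐ x, x ∈ Ioi (0 : ℝ) →
      HasDerivAt (adjointHardy α f) (-(α * adjointHardy α f x + f x) / x) x := by
  filter_upwards [ae_hasDerivAt_integral_Ioi hf] with x hx hx0
  have hx_pos : 0 < x := hx0
  have rpow_mul_rpow : x ^ (-α) * x ^ (α - 1) = x⁻¹ := by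
    rw [← Real.rpow_add hx_pos, show -α + (α - 1) = -1 by ring, Real.rpow_neg_one]
  refine ((Real.hasDerivAt_rpow_const (Or.inl hx_pos.ne')).fun_mul (hx hx0)).congr_deriv ?_
  rw [Real.rpow_sub_one hx_pos.ne', adjointHardy]
  linear_combination -f x * rpow_mul_rpow

theorem ae_mul_deriv_adjointHardy_rpow (p : ℝ)
    (hf : ∀ x ∈ Ioi (0 : ℝ), IntegrableOn (fun t => f t * t ^ (α - 1)) (Ioi x))
    (hT : ∀ x ∈ Ioi (0 : ℝ), adjointHardy α f x ≠ 0) :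
    ∀ᵐ x, x ∈ Ioi (0 : ℝ) → x * deriv (fun y => adjointHardy α f y ^ p) x =
      -(α * p * adjointHardy α f x ^ p + p * (adjointHardy α f x ^ (p - 1) * f x)) := by
  filter_upwards [ae_hasDerivAt_adjointHardy hf] with x hx hx0
  have hx_ne : x ≠ 0 := ne_of_gt hx0
  have hTx := hT x hx0
  rw [((hx hx0).rpow_const (Or.inl hTx)).deriv, Real.rpow_sub_one hTx]
  field_simp

end AdjointHardy

theorem stmt_7_general (p α : ℝ) (f : ℝ → ℝ)
    (hFint : ∀ x ∈ Ioi (0 : ℝ), IntegrableOn (fun t => f t * t ^ (α - 1)) (Ioi x))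
    (hFpos : ∀ x ∈ Ioi (0 : ℝ), 0 < ∫ t in Ioi x, f t * t ^ (α - 1))
    (hI1 : IntegrableOn (fun x => adjointHardy α f x ^ p) (Ioi 0))
    (hI2 : IntegrableOn (fun x => adjointHardy α f x ^ (p - 1) * f x) (Ioi 0)) :
    (1 - α * p) * ∫ x in Ioi (0 : ℝ), adjointHardy α f x ^ p =
      p * ∫ x in Ioi (0 : ℝ), adjointHardy α f x ^ (p - 1) * f x := by
  have hT : ∀ x ∈ Ioi (0 : ℝ), adjointHardy α f x ≠ 0 := fun x hx =>
    (mul_pos (Real.rpow_pos_of_pos hx _) (hFpos x hx)).ne'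
  have rpow_ac : ∀ a b, 0 < a → a ≤ b →
      AbsolutelyContinuousOnInterval (fun x => adjointHardy α f x ^ p) a b := fun a b ha hab =>
    absolutelyContinuousOnInterval_rpow_const p
      (absolutelyContinuousOnInterval_adjointHardy ha hab (hFint a ha))
      fun x hx => hT x (ha.trans_le (uIcc_of_le hab ▸ hx).1)
  have mul_deriv_eq := ae_mul_deriv_adjointHardy_rpow p hFint hT
  have mul_deriv_int :
      IntegrableOn (fun x => x * deriv (fun y => adjointHardy α f y ^ p) x) (Ioi 0) := by
    refine (((hI1.const_mul (α * p)).add (hI2.const_mul p)).neg).congr ?_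
    filter_upwards [ae_restrict_of_ae mul_deriv_eq, ae_restrict_mem measurableSet_Ioi]
      with x hx hx0 using (hx hx0).symm
  have by_parts :=
    calc ∫ x in Ioi 0, adjointHardy α f x ^ p
      _ = -∫ x in Ioi 0, x * deriv (fun y => adjointHardy α f y ^ p) x :=
        integral_Ioi_eq_neg_integral_mul_deriv rpow_ac hI1 mul_deriv_int
      _ = ∫ x in Ioi 0,
          α * p * adjointHardy α f x ^ p + p * (adjointHardy α f x ^ (p - 1) * f x) := by
        rw [setIntegral_congr_ae measurableSet_Ioi mul_deriv_eq, integral_neg, neg_neg]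
      _ = α * p * (∫ x in Ioi 0, adjointHardy α f x ^ p) +
          p * ∫ x in Ioi 0, adjointHardy α f x ^ (p - 1) * f x := by
        rw [integral_add (hI1.const_mul _) (hI2.const_mul _), integral_const_mul,
          integral_const_mul]
  linear_combination by_parts

/-- Identity (4.1)/(20): for `0 < p < 1`, `α < 1/p` and suitable `f ≥ 0` on `(0,∞)`:
`∫_0^∞ (x^{-α} ∫_x^∞ f(t) t^{α-1} dt)^p dx
  = (p/(1-αp)) ∫_0^∞ (x^{-α} ∫_x^∞ f(t) t^{α-1} dt)^{p-1} f(x) dx`. -/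
theorem stmt_7 (p α : ℝ) (hp0 : 0 < p) (hp1 : p < 1) (hα : α < 1 / p)
    (f : ℝ → ℝ) (hf : Measurable f) (hf0 : ∀ x ∈ Set.Ioi (0 : ℝ), 0 ≤ f x)
    (hFint : ∀ x ∈ Set.Ioi (0 : ℝ),
      IntegrableOn (fun t => f t * t ^ (α - 1)) (Set.Ioi x))
    (hFpos : ∀ x ∈ Set.Ioi (0 : ℝ), 0 < ∫ t in Set.Ioi x, f t * t ^ (α - 1))
    (hI1 : IntegrableOn
      (fun x => (x ^ (-α) * ∫ t in Set.Ioi x, f t * t ^ (α - 1)) ^ p) (Set.Ioi 0))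
    (hI2 : IntegrableOn
      (fun x => (x ^ (-α) * ∫ t in Set.Ioi x, f t * t ^ (α - 1)) ^ (p - 1) * f x)
      (Set.Ioi 0)) :
    ∫ x in Set.Ioi (0 : ℝ), (x ^ (-α) * ∫ t in Set.Ioi x, f t * t ^ (α - 1)) ^ p =
      (p / (1 - α * p)) *
        ∫ x in Set.Ioi (0 : ℝ),
          (x ^ (-α) * ∫ t in Set.Ioi x, f t * t ^ (α - 1)) ^ (p - 1) * f x := by
  have hαp : α * p < 1 := (lt_div_iff₀ hp0).1 hα
  rw [div_mul_eq_mul_div, eq_div_iff (by linarith), mul_comm]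
  exact stmt_7_general p α f hFint hFpos hI1 hI2
end

section
/- Let 0 < p < 1 and let α be a real number with α < 1/p. Then for every measurable f : (0,∞) → [0,∞), ∫_0^∞ ( x^{−α}·∫_x^∞ f(t)·t^{α−1} dt )^p dx ≥ (p/(1−αp))^p · ∫_0^∞ f(x)^p dx. -/
open MeasureTheory
open scoped ENNReal

/-!
Put `β = 1 / p - α > 0`. For `0 < p ≤ 1` Hölder's inequality with exponents `1 / p` and
`1 / (1 - p)`, applied to the factorisation
`f(t)^p t^{-β} = (f(t) t^{α-1})^p (t^{-β-1})^{1-p}` on `(x, ∞)`, bounds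
`(x^{-α} ∫_x^∞ f(t) t^{α-1} dt)^p` below by `β^{1-p} x^{β-1} ∫_x^∞ f(t)^p t^{-β} dt`. This lower
bound is linear in `f^p`, and by Tonelli its integral over `x > 0` is exactly `β^{-p} ∫_0^∞ f^p`.
-/

section
open Set

lemma lintegral_Ioi_rpow_of_lt {a c : ℝ} (ha : a < -1) (hc : 0 < c) :
    ∫⁻ t in Ioi c, ENNReal.ofReal (t ^ a) = ENNReal.ofReal (-c ^ (a + 1) / (a + 1)) := by
  have h_nonneg : 0 ≤ᵐ[volume.restrict (Ioi c)] fun t ↦ t ^ a := by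
    filter_upwards [ae_restrict_mem measurableSet_Ioi] with t ht
    exact Real.rpow_nonneg (hc.trans ht).le a
  rw [← ofReal_integral_eq_lintegral_ofReal (integrableOn_Ioi_rpow_of_lt ha hc) h_nonneg,
    integral_Ioi_rpow_of_lt ha hc]

lemma lintegral_Ioo_zero_rpow {a c : ℝ} (ha : -1 < a) (hc : 0 ≤ c) :
    ∫⁻ t in Ioo 0 c, ENNReal.ofReal (t ^ a) = ENNReal.ofReal (c ^ (a + 1) / (a + 1)) := by
  have h_integrable : IntegrableOn (fun t : ℝ ↦ t ^ a) (Ioc 0 c) :=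
    (intervalIntegrable_iff_integrableOn_Ioc_of_le hc).1
      (intervalIntegral.intervalIntegrable_rpow' ha)
  have h_nonneg : 0 ≤ᵐ[volume.restrict (Ioc 0 c)] fun t ↦ t ^ a := by
    filter_upwards [ae_restrict_mem measurableSet_Ioc] with t ht
    exact Real.rpow_nonneg ht.1.le a
  rw [restrict_Ioo_eq_restrict_Ioc, ← ofReal_integral_eq_lintegral_ofReal h_integrable h_nonneg,
    ← intervalIntegral.integral_of_le hc, integral_rpow (.inl ha),
    Real.zero_rpow (by linarith), sub_zero]

section Swap

variable {X : Type*} [LinearOrder X] [TopologicalSpace X] [OrderClosedTopology X]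
  [SecondCountableTopology X] [MeasurableSpace X] [OpensMeasurableSpace X]
  {μ ν : Measure X} [SFinite μ] [SFinite ν] {w h : X → ℝ≥0∞}

lemma lintegral_mul_lintegral_Ioi_swap (hw : AEMeasurable w μ) (hh : AEMeasurable h ν) :
    ∫⁻ x, w x * ∫⁻ t in Ioi x, h t ∂ν ∂μ = ∫⁻ t, h t * ∫⁻ x in Iio t, w x ∂μ ∂ν := by
  have h_aemeasurable : AEMeasurable
      ({z : X × X | z.1 < z.2}.indicator fun z ↦ w z.1 * h z.2) (μ.prod ν) :=
    (hw.comp_fst.mul hh.comp_snd).indicator (measurableSet_lt measurable_fst measurable_snd)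
  calc
    _ = ∫⁻ x, ∫⁻ t, {z : X × X | z.1 < z.2}.indicator (fun z ↦ w z.1 * h z.2) (x, t) ∂ν ∂μ := by
      refine lintegral_congr fun x ↦ ?_
      rw [← lintegral_const_mul'' _ hh.restrict, ← lintegral_indicator measurableSet_Ioi]
      rfl
    _ = ∫⁻ t, ∫⁻ x, {z : X × X | z.1 < z.2}.indicator (fun z ↦ w z.1 * h z.2) (x, t) ∂μ ∂ν :=
      lintegral_lintegral_swap h_aemeasurable
    _ = _ := by
      refine lintegral_congr fun t ↦ ?_
      rw [← lintegral_const_mul'' _ hw.restrict, ← lintegral_indicator measurableSet_Iio]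
      simp only [mul_comm (h t)]
      rfl

lemma setLIntegral_Ioi_mul_lintegral_Ioi_swap {c : X}
    (hw : AEMeasurable w (μ.restrict (Ioi c))) (hh : AEMeasurable h (ν.restrict (Ioi c))) :
    ∫⁻ x in Ioi c, w x * ∫⁻ t in Ioi x, h t ∂ν ∂μ =
      ∫⁻ t in Ioi c, h t * ∫⁻ x in Ioo c t, w x ∂μ ∂ν := by
  calc
    _ = ∫⁻ x in Ioi c, w x * ∫⁻ t in Ioi x, h t ∂ν.restrict (Ioi c) ∂μ := by
      refine setLIntegral_congr_fun measurableSet_Ioi fun x hx ↦ ?_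
      rw [Measure.restrict_restrict_of_subset (Ioi_subset_Ioi (le_of_lt hx))]
    _ = ∫⁻ t in Ioi c, h t * ∫⁻ x in Iio t, w x ∂μ.restrict (Ioi c) ∂ν :=
      lintegral_mul_lintegral_Ioi_swap hw hh
    _ = _ := by
      simp only [Measure.restrict_restrict measurableSet_Iio, Iio_inter_Ioi]

end Swap

lemma lintegral_rpow_mul_lintegral_Ioi_mul_rpow_neg {β : ℝ} (hβ : 0 < β) {g : ℝ → ℝ≥0∞}
    (hg : AEMeasurable g (volume.restrict (Ioi 0))) :
    ∫⁻ x in Ioi (0 : ℝ), ENNReal.ofReal (x ^ (β - 1)) *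
        ∫⁻ t in Ioi x, g t * ENNReal.ofReal (t ^ (-β)) =
      ENNReal.ofReal β⁻¹ * ∫⁻ t in Ioi (0 : ℝ), g t := by
  rw [setLIntegral_Ioi_mul_lintegral_Ioi_swap (by fun_prop) (by fun_prop),
    ← lintegral_const_mul'' _ hg]
  refine setLIntegral_congr_fun measurableSet_Ioi fun t (ht : 0 < t) ↦ ?_
  have h_weight : t ^ (-β) * (t ^ β / β) = β⁻¹ := by
    rw [← mul_div_assoc, ← Real.rpow_add ht, neg_add_cancel, Real.rpow_zero, one_div]
  rw [lintegral_Ioo_zero_rpow (by linarith) ht.le, sub_add_cancel, mul_assoc,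
    ← ENNReal.ofReal_mul (by positivity), h_weight, mul_comm]

section Pointwise

variable {p α β x : ℝ} {f : ℝ → ℝ≥0∞}

lemma lintegral_Ioi_rpow_mul_rpow_neg_le (hp0 : 0 < p) (hp1 : p ≤ 1) (hβ : 0 < β)
    (hαβ : (α + β) * p = 1) (hx : 0 < x) (hf : AEMeasurable f (volume.restrict (Ioi x))) :
    ∫⁻ t in Ioi x, f t ^ p * ENNReal.ofReal (t ^ (-β)) ≤
      (∫⁻ t in Ioi x, f t * ENNReal.ofReal (t ^ (α - 1))) ^ p *
        ENNReal.ofReal (x ^ (-β) / β) ^ (1 - p) := by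
  have h_tail : ∫⁻ t in Ioi x, ENNReal.ofReal (t ^ (-β - 1)) = ENNReal.ofReal (x ^ (-β) / β) := by
    rw [lintegral_Ioi_rpow_of_lt (by linarith) hx, sub_add_cancel, neg_div_neg_eq]
  calc
    _ = ∫⁻ t in Ioi x, (f t * ENNReal.ofReal (t ^ (α - 1))) ^ p *
          ENNReal.ofReal (t ^ (-β - 1)) ^ (1 - p) := by
      refine setLIntegral_congr_fun measurableSet_Ioi fun t ht ↦ ?_
      have ht0 : 0 < t := hx.trans ht
      have h_exponent : (α - 1) * p + (-β - 1) * (1 - p) = -β := by linarith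
      rw [ENNReal.mul_rpow_of_nonneg _ _ hp0.le, mul_assoc,
        ENNReal.ofReal_rpow_of_pos (by positivity), ENNReal.ofReal_rpow_of_pos (by positivity),
        ← ENNReal.ofReal_mul (by positivity), ← Real.rpow_mul ht0.le, ← Real.rpow_mul ht0.le,
        ← Real.rpow_add ht0, h_exponent]
    _ ≤ _ := by
      rw [← h_tail]
      exact ENNReal.lintegral_mul_norm_pow_le (by fun_prop) (by fun_prop) hp0.le
        (by linarith) (by ring)

lemma mul_lintegral_Ioi_rpow_mul_rpow_neg_le (hp0 : 0 < p) (hp1 : p ≤ 1) (hβ : 0 < β)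
    (hαβ : (α + β) * p = 1) (hx : 0 < x) (hf : AEMeasurable f (volume.restrict (Ioi x))) :
    ENNReal.ofReal (β ^ (1 - p)) * (ENNReal.ofReal (x ^ (β - 1)) *
        ∫⁻ t in Ioi x, f t ^ p * ENNReal.ofReal (t ^ (-β))) ≤
      (ENNReal.ofReal (x ^ (-α)) * ∫⁻ t in Ioi x, f t * ENNReal.ofReal (t ^ (α - 1))) ^ p := by
  have h_weight : β ^ (1 - p) * x ^ (β - 1) * (x ^ (-β) / β) ^ (1 - p) = (x ^ (-α)) ^ p := by
    have h_exponent : β - 1 + -β * (1 - p) = -α * p := by linarith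
    have : β ^ (1 - p) ≠ 0 := by positivity
    rw [Real.div_rpow (by positivity) hβ.le, ← Real.rpow_mul hx.le, ← Real.rpow_mul hx.le,
      ← h_exponent, Real.rpow_add hx]
    field_simp
  set A := ∫⁻ t in Ioi x, f t * ENNReal.ofReal (t ^ (α - 1))
  calc
    _ ≤ ENNReal.ofReal (β ^ (1 - p)) * (ENNReal.ofReal (x ^ (β - 1)) *
          (A ^ p * ENNReal.ofReal (x ^ (-β) / β) ^ (1 - p))) := by
      gcongr
      exact lintegral_Ioi_rpow_mul_rpow_neg_le hp0 hp1 hβ hαβ hx hf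
    _ = ENNReal.ofReal (β ^ (1 - p) * x ^ (β - 1) * (x ^ (-β) / β) ^ (1 - p)) * A ^ p := by
      rw [ENNReal.ofReal_rpow_of_pos (by positivity), ENNReal.ofReal_mul (by positivity),
        ENNReal.ofReal_mul (by positivity)]
      ring
    _ = _ := by
      rw [h_weight, ENNReal.mul_rpow_of_nonneg _ _ hp0.le,
        ENNReal.ofReal_rpow_of_pos (by positivity)]

end Pointwise

theorem stmt_8_general {p α : ℝ} (hp0 : 0 < p) (hp1 : p ≤ 1) (hα : α < 1 / p)
    {f : ℝ → ℝ≥0∞} (hf : AEMeasurable f (volume.restrict (Ioi 0))) :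
    ENNReal.ofReal ((p / (1 - α * p)) ^ p) * ∫⁻ x in Ioi (0 : ℝ), f x ^ p ≤
      ∫⁻ x in Ioi (0 : ℝ), (ENNReal.ofReal (x ^ (-α)) *
        ∫⁻ t in Ioi x, f t * ENNReal.ofReal (t ^ (α - 1))) ^ p := by
  obtain ⟨β, rfl⟩ : ∃ β, α = 1 / p - β := ⟨1 / p - α, by ring⟩
  have hβ : 0 < β := by linarith
  have h_sum : (1 / p - β + β) * p = 1 := by field_simp; ring
  have h_const : (p / (1 - (1 / p - β) * p)) ^ p = β ^ (1 - p) * β⁻¹ := by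
    have h_base : p / (1 - (1 / p - β) * p) = β⁻¹ := by field_simp; ring
    rw [h_base, Real.inv_rpow hβ.le, Real.rpow_sub hβ, Real.rpow_one]
    field_simp
  calc
    _ = ENNReal.ofReal (β ^ (1 - p)) * ∫⁻ x in Ioi (0 : ℝ), ENNReal.ofReal (x ^ (β - 1)) *
          ∫⁻ t in Ioi x, f t ^ p * ENNReal.ofReal (t ^ (-β)) := by
      rw [lintegral_rpow_mul_lintegral_Ioi_mul_rpow_neg hβ (hf.pow_const p), h_const,
        ENNReal.ofReal_mul (by positivity), mul_assoc]
    _ ≤ _ := by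
      rw [← lintegral_const_mul' _ _ ENNReal.ofReal_ne_top]
      refine setLIntegral_mono' measurableSet_Ioi fun x hx ↦ ?_
      exact mul_lintegral_Ioi_rpow_mul_rpow_neg_le hp0 hp1 hβ h_sum hx
        (hf.mono_set (Ioi_subset_Ioi (le_of_lt hx)))

end

/-- For `0 < p < 1`, `α < 1/p` and measurable `f ≥ 0` on `(0,∞)`:
`∫_0^∞ (x^{-α} ∫_x^∞ f(t) t^{α-1} dt)^p dx ≥ (p/(1-αp))^p ∫_0^∞ f(x)^p dx`. -/
theorem stmt_8 (p α : ℝ) (hp0 : 0 < p) (hp1 : p < 1) (hα : α < 1 / p)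
    (f : ℝ → ℝ) (hf : Measurable f) (hf0 : ∀ x ∈ Set.Ioi (0 : ℝ), 0 ≤ f x) :
    ENNReal.ofReal ((p / (1 - α * p)) ^ p) * ∫⁻ x in Set.Ioi (0 : ℝ), ENNReal.ofReal (f x) ^ p ≤
      ∫⁻ x in Set.Ioi (0 : ℝ),
        (ENNReal.ofReal (x ^ (-α)) *
          ∫⁻ t in Set.Ioi x, ENNReal.ofReal (f t * t ^ (α - 1))) ^ p := by
  refine (stmt_8_general hp0 hp1.le hα hf.ennreal_ofReal.aemeasurable).trans_eq
    (setLIntegral_congr_fun measurableSet_Ioi fun x hx ↦ ?_)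
  rw [setLIntegral_congr_fun measurableSet_Ioi fun t ht ↦
    (ENNReal.ofReal_mul (hf0 t (lt_trans hx ht))).symm]
end

section
/- Let 0 < p < 1 and 0 < α < 1/p. For a nonnegative real sequence (a_n)_{n≥1} set T_n = n^{−α}·∑_{k=n}^∞ ((k+1)^α − k^α)·a_k. Then (1 + 1/(1−αp))·T_1^p + ∑_{n=2}^∞ T_n^p ≥ (αp/(1−αp))^p · ∑_{n=1}^∞ a_n^p. -/
open scoped ENNReal

/-!
Let `S n = ∑_{k ≥ n} ((k + 1)^α - k^α) a k`, so that `T n = n^(-α) S n`. Concavity of `t ↦ t ^ p`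
gives two tangent-line bounds: one for `(c a n)^p` at the point `(n + 1)^(-α) S n`, where
`c = αp / (1 - αp)`, and one for `S (n + 1)^p` at the point `S n`. Adding a multiple `w (n + 1)` of
the second to the first makes the coefficient of `a n` nonpositive once `w` is large enough. By
Bernoulli's inequality `w x = p / (1 - αp) * (x + max (α - 1) 0) * x^(-αp)` is, while also growing
slowly enough that
`c^p (a n)^p + w (n + 1) S (n + 1)^p ≤ w n S n^p + T n^p`.
These inequalities telescope, leaving the boundary term `w 1 * T 1 ^ p ≤ 1 / (1 - αp) * T 1 ^ p`.
All terms being added rather than subtracted, the telescoping takes place in `[0, ∞]`.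
-/

section Bernoulli

variable {r x : ℝ}

lemma add_one_mul_rpow_le (hr₀ : 0 ≤ r) (hr₁ : r ≤ 1) (hx : 0 ≤ x) :
    (x + 1) * x ^ r ≤ (x + 1 - r) * (x + 1) ^ r := by
  have hx₁ : 0 < x + 1 := by linarith
  have bernoulli : (x / (x + 1)) ^ r ≤ 1 - r / (x + 1) := by
    have h := rpow_one_add_le_one_add_mul_self (s := x / (x + 1) - 1)
      (by linarith [div_nonneg hx hx₁.le]) hr₀ hr₁
    calc (x / (x + 1)) ^ r ≤ 1 + r * (x / (x + 1) - 1) := by simpa using h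
      _ = 1 - r / (x + 1) := by field_simp; ring
  rw [Real.div_rpow hx hx₁.le, div_le_iff₀ (by positivity)] at bernoulli
  calc (x + 1) * x ^ r ≤ (x + 1) * ((1 - r / (x + 1)) * (x + 1) ^ r) := by gcongr
    _ = (x + 1 - r) * (x + 1) ^ r := by field_simp

lemma add_mul_rpow_le (hr : 1 ≤ r) (hx : 0 < x) :
    (x + r) * x ^ r ≤ x * (x + 1) ^ r := by
  have bernoulli : 1 + r * x⁻¹ ≤ ((x + 1) / x) ^ r := by
    have h := one_add_mul_self_le_rpow_one_add (s := x⁻¹) (by linarith [inv_pos.2 hx]) hr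
    rwa [show 1 + x⁻¹ = (x + 1) / x by field_simp] at h
  rw [Real.div_rpow (by positivity) hx.le, le_div_iff₀ (by positivity)] at bernoulli
  calc (x + r) * x ^ r = x * ((1 + r * x⁻¹) * x ^ r) := by field_simp
    _ ≤ x * (x + 1) ^ r := by gcongr

lemma add_one_mul_rpow_neg_le (hr₀ : 0 ≤ r) (hr₁ : r ≤ 1) (hx : 0 < x) :
    (x + 1) * (x + 1) ^ (-r) ≤ (x + 1 - r) * x ^ (-r) := by
  rw [Real.rpow_neg (by positivity), Real.rpow_neg hx.le, ← div_eq_mul_inv, ← div_eq_mul_inv,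
    div_le_div_iff₀ (by positivity) (by positivity)]
  exact add_one_mul_rpow_le hr₀ hr₁ hx.le

lemma mul_rpow_add_one_le_add_max_mul_sub (hr : 0 ≤ r) (hx : 0 < x) :
    r * (x + 1) ^ r ≤ (x + 1 + max (r - 1) 0) * ((x + 1) ^ r - x ^ r) := by
  rcases le_total r 1 with hr₁ | hr₁
  · rw [max_eq_right (by linarith)]
    linarith [add_one_mul_rpow_le hr hr₁ hx.le]
  · rw [max_eq_left (by linarith)]
    linarith [add_mul_rpow_le hr₁ hx]

end Bernoulli

lemma rpow_add_one_sub_rpow_pos {r x : ℝ} (hr : 0 < r) (hx : 0 ≤ x) : 0 < (x + 1) ^ r - x ^ r :=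
  sub_pos.2 (Real.rpow_lt_rpow hx (lt_add_one x) hr)

section Concavity

variable {p : ℝ}

lemma rpow_le_tangent {x y : ℝ} (hp₀ : 0 ≤ p) (hp₁ : p ≤ 1) (hx : 0 ≤ x) (hy : 0 < y) :
    x ^ p ≤ y ^ p + p * y ^ (p - 1) * (x - y) := by
  have bernoulli : (x / y) ^ p ≤ 1 + p * (x / y - 1) := by
    simpa using rpow_one_add_le_one_add_mul_self (s := x / y - 1)
      (by linarith [div_nonneg hx hy.le]) hp₀ hp₁
  rw [Real.div_rpow hx hy.le, div_le_iff₀ (by positivity)] at bernoulli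
  calc x ^ p ≤ (1 + p * (x / y - 1)) * y ^ p := bernoulli
    _ = y ^ p + p * y ^ (p - 1) * (x - y) := by
      rw [Real.rpow_sub_one hy.ne']
      field_simp

lemma mul_rpow_add_mul_rpow_le {b c d w x y : ℝ} (hp₀ : 0 < p) (hp₁ : p ≤ 1) (hb : 0 < b)
    (hc : 0 ≤ c) (hd : 0 < d) (hw : 0 ≤ w) (hx : 0 ≤ x) (hy : 0 ≤ y)
    (hslope : c * b ^ (p - 1) ≤ w * d) :
    (c * x) ^ p + w * y ^ p ≤ (w + (1 - p) * b ^ p) * (d * x + y) ^ p := by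
  rcases (by positivity : 0 ≤ d * x + y).eq_or_lt with hzero | hpos
  · obtain ⟨hdx, rfl⟩ : d * x = 0 ∧ y = 0 :=
      (add_eq_zero_iff_of_nonneg (by positivity) hy).1 hzero.symm
    obtain rfl : x = 0 := (mul_eq_zero.1 hdx).resolve_left hd.ne'
    simp [Real.zero_rpow hp₀.ne']
  set s := d * x + y with hs
  have tangent_cx : (c * x) ^ p ≤
      (1 - p) * b ^ p * s ^ p + p * s ^ (p - 1) * x * (c * b ^ (p - 1)) := by
    have hbs : b * b ^ (p - 1) = b ^ p := by rw [Real.rpow_sub_one hb.ne']; field_simp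
    have hss : s * s ^ (p - 1) = s ^ p := by rw [Real.rpow_sub_one hpos.ne']; field_simp
    have h := rpow_le_tangent hp₀.le hp₁ (mul_nonneg hc hx) (mul_pos hb hpos)
    rw [Real.mul_rpow hb.le hpos.le, Real.mul_rpow hb.le hpos.le] at h
    refine h.trans_eq ?_
    rw [← hbs, ← hss]
    ring
  have tangent_y : y ^ p ≤ s ^ p - p * s ^ (p - 1) * x * d :=
    (rpow_le_tangent hp₀.le hp₁ hy hpos).trans_eq (by rw [hs]; ring)
  calc (c * x) ^ p + w * y ^ p
      ≤ ((1 - p) * b ^ p * s ^ p + p * s ^ (p - 1) * x * (c * b ^ (p - 1)))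
        + w * (s ^ p - p * s ^ (p - 1) * x * d) := by gcongr
    _ = (w + (1 - p) * b ^ p) * s ^ p - p * s ^ (p - 1) * x * (w * d - c * b ^ (p - 1)) := by ring
    _ ≤ (w + (1 - p) * b ^ p) * s ^ p :=
      sub_le_self _ (mul_nonneg (by positivity) (sub_nonneg.2 hslope))

end Concavity

/-- The weight `w` multiplying `S n ^ p` in the telescoping inequality. The shift `max (α - 1) 0`
makes the bound `mul_rpow_le_telescopingWeight_mul_sub` hold on both sides of `α = 1`. -/
noncomputable def telescopingWeight (α p x : ℝ) : ℝ :=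
  p / (1 - α * p) * ((x + max (α - 1) 0) * x ^ (-(α * p)))

section Weight

variable {α p x : ℝ}

lemma telescopingWeight_nonneg (hp : 0 ≤ p) (hαp : α * p < 1) (hx : 0 ≤ x) :
    0 ≤ telescopingWeight α p x := by
  have : 0 < 1 - α * p := sub_pos.2 hαp
  unfold telescopingWeight
  positivity

lemma telescopingWeight_one_le (hp : p ≤ 1) (hαp : α * p < 1) :
    telescopingWeight α p 1 ≤ 1 / (1 - α * p) := by
  have : 0 < 1 - α * p := sub_pos.2 hαp
  have hshift : p * (1 + max (α - 1) 0) ≤ 1 := by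
    rcases max_choice (α - 1) 0 with h | h <;> rw [h] <;> linarith
  calc telescopingWeight α p 1 = p * (1 + max (α - 1) 0) / (1 - α * p) := by
        rw [telescopingWeight, Real.one_rpow]; ring
    _ ≤ 1 / (1 - α * p) := by gcongr

lemma telescopingWeight_add_one_le (hα : 0 ≤ α) (hp₀ : 0 ≤ p) (hp₁ : p ≤ 1) (hαp : α * p < 1)
    (hx : 0 < x) :
    telescopingWeight α p (x + 1) + (1 - p) * (x + 1) ^ (-(α * p)) ≤
      telescopingWeight α p x + x ^ (-(α * p)) := by
  have hd : 0 < 1 - α * p := sub_pos.2 hαp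
  have hanti : (x + 1) ^ (-(α * p)) ≤ x ^ (-(α * p)) :=
    Real.rpow_le_rpow_of_nonpos hx (by linarith) (neg_nonpos.2 (by positivity))
  have hbernoulli := add_one_mul_rpow_neg_le (by positivity) hαp.le hx
  unfold telescopingWeight
  set s := max (α - 1) 0
  have : 0 ≤ s := le_max_right _ _
  calc p / (1 - α * p) * ((x + 1 + s) * (x + 1) ^ (-(α * p))) + (1 - p) * (x + 1) ^ (-(α * p))
      = p / (1 - α * p) * ((x + 1) * (x + 1) ^ (-(α * p)) + s * (x + 1) ^ (-(α * p)))
        + (1 - p) * (x + 1) ^ (-(α * p)) := by ring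
    _ ≤ p / (1 - α * p) * ((x + 1 - α * p) * x ^ (-(α * p)) + s * x ^ (-(α * p)))
        + (1 - p) * x ^ (-(α * p)) := by
      have : 0 ≤ 1 - p := sub_nonneg.2 hp₁
      gcongr
    _ = p / (1 - α * p) * ((x + s) * x ^ (-(α * p))) + x ^ (-(α * p)) := by
      linear_combination x ^ (-(α * p)) * div_mul_cancel₀ p hd.ne'

lemma mul_rpow_le_telescopingWeight_mul_sub (hα : 0 ≤ α) (hp : 0 ≤ p) (hαp : α * p < 1)
    (hx : 0 < x) :
    α * p / (1 - α * p) * ((x + 1) ^ (-α)) ^ (p - 1) ≤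
      telescopingWeight α p (x + 1) * ((x + 1) ^ α - x ^ α) := by
  have : 0 < 1 - α * p := sub_pos.2 hαp
  have hx₁ : 0 < x + 1 := by linarith
  have hpow : ((x + 1) ^ (-α)) ^ (p - 1) = (x + 1) ^ α * (x + 1) ^ (-(α * p)) := by
    rw [← Real.rpow_mul hx₁.le, ← Real.rpow_add hx₁]
    ring_nf
  calc α * p / (1 - α * p) * ((x + 1) ^ (-α)) ^ (p - 1)
      = p / (1 - α * p) * (x + 1) ^ (-(α * p)) * (α * (x + 1) ^ α) := by rw [hpow]; ring
    _ ≤ p / (1 - α * p) * (x + 1) ^ (-(α * p)) *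
        ((x + 1 + max (α - 1) 0) * ((x + 1) ^ α - x ^ α)) := by
      gcongr ?_ * ?_
      exact mul_rpow_add_one_le_add_max_mul_sub hα hx
    _ = telescopingWeight α p (x + 1) * ((x + 1) ^ α - x ^ α) := by
      rw [telescopingWeight]; ring

lemma mul_rpow_add_telescopingWeight_mul_rpow_le {y z : ℝ} (hp₀ : 0 < p) (hp₁ : p ≤ 1)
    (hα : 0 < α) (hαp : α * p < 1) (hx : 0 < x) (hy : 0 ≤ y) (hz : 0 ≤ z) :
    (α * p / (1 - α * p) * y) ^ p + telescopingWeight α p (x + 1) * z ^ p ≤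
      telescopingWeight α p x * (((x + 1) ^ α - x ^ α) * y + z) ^ p +
        (x ^ (-α) * (((x + 1) ^ α - x ^ α) * y + z)) ^ p := by
  have : 0 < 1 - α * p := sub_pos.2 hαp
  have hx₁ : 0 < x + 1 := by linarith
  have hΔ : 0 < (x + 1) ^ α - x ^ α := rpow_add_one_sub_rpow_pos hα hx.le
  have hs : 0 ≤ ((x + 1) ^ α - x ^ α) * y + z := by positivity
  have hpow {t : ℝ} (ht : 0 ≤ t) : (t ^ (-α)) ^ p = t ^ (-(α * p)) := by
    rw [← Real.rpow_mul ht, neg_mul]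
  calc (α * p / (1 - α * p) * y) ^ p + telescopingWeight α p (x + 1) * z ^ p
      ≤ (telescopingWeight α p (x + 1) + (1 - p) * ((x + 1) ^ (-α)) ^ p) *
        (((x + 1) ^ α - x ^ α) * y + z) ^ p :=
      mul_rpow_add_mul_rpow_le hp₀ hp₁ (by positivity) (by positivity) hΔ
        (telescopingWeight_nonneg hp₀.le hαp hx₁.le) hy hz
        (mul_rpow_le_telescopingWeight_mul_sub hα.le hp₀.le hαp hx)
    _ ≤ (telescopingWeight α p x + (x ^ (-α)) ^ p) * (((x + 1) ^ α - x ^ α) * y + z) ^ p := by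
      rw [hpow hx₁.le, hpow hx.le]
      gcongr ?_ * _
      exact telescopingWeight_add_one_le hα.le hp₀.le hp₁ hαp hx
    _ = _ := by rw [Real.mul_rpow (by positivity) hs]; ring

lemma ofReal_mul_rpow_add_telescopingWeight_mul_rpow_le (y z : ℝ≥0∞) (hp₀ : 0 < p) (hp₁ : p ≤ 1)
    (hα : 0 < α) (hαp : α * p < 1) (hx : 0 < x) :
    ENNReal.ofReal ((α * p / (1 - α * p)) ^ p) * y ^ p +
        ENNReal.ofReal (telescopingWeight α p (x + 1)) * z ^ p ≤
      ENNReal.ofReal (telescopingWeight α p x) *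
          (ENNReal.ofReal ((x + 1) ^ α - x ^ α) * y + z) ^ p +
        (ENNReal.ofReal (x ^ (-α)) * (ENNReal.ofReal ((x + 1) ^ α - x ^ α) * y + z)) ^ p := by
  have : 0 < 1 - α * p := sub_pos.2 hαp
  have hΔ : 0 < (x + 1) ^ α - x ^ α := rpow_add_one_sub_rpow_pos hα hx.le
  have hxα : 0 < x ^ (-α) := Real.rpow_pos_of_pos hx _
  by_cases hfin : ENNReal.ofReal ((x + 1) ^ α - x ^ α) * y + z = ∞
  · simp [hfin, ENNReal.mul_top, hxα, hp₀]
  have hz : z ≠ ∞ := (ENNReal.add_ne_top.1 hfin).2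
  have hy : y ≠ ∞ := by
    rintro rfl
    simp [ENNReal.mul_top, (ENNReal.ofReal_pos.2 hΔ).ne'] at hfin
  obtain ⟨y, hy₀, rfl⟩ : ∃ t : ℝ, 0 ≤ t ∧ ENNReal.ofReal t = y :=
    ⟨y.toReal, ENNReal.toReal_nonneg, ENNReal.ofReal_toReal hy⟩
  obtain ⟨z, hz₀, rfl⟩ : ∃ t : ℝ, 0 ≤ t ∧ ENNReal.ofReal t = z :=
    ⟨z.toReal, ENNReal.toReal_nonneg, ENNReal.ofReal_toReal hz⟩
  have hw : 0 ≤ telescopingWeight α p x := telescopingWeight_nonneg hp₀.le hαp hx.le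
  have hw₁ : 0 ≤ telescopingWeight α p (x + 1) :=
    telescopingWeight_nonneg hp₀.le hαp (by positivity)
  have hreal := mul_rpow_add_telescopingWeight_mul_rpow_le hp₀ hp₁ hα hαp hx hy₀ hz₀
  rw [Real.mul_rpow (by positivity) hy₀] at hreal
  have hs : 0 ≤ ((x + 1) ^ α - x ^ α) * y + z := by positivity
  rw [← ENNReal.ofReal_mul hΔ.le, ← ENNReal.ofReal_add (by positivity) hz₀,
    ← ENNReal.ofReal_mul hxα.le, ENNReal.ofReal_rpow_of_nonneg hy₀ hp₀.le,
    ENNReal.ofReal_rpow_of_nonneg hz₀ hp₀.le, ENNReal.ofReal_rpow_of_nonneg hs hp₀.le,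
    ENNReal.ofReal_rpow_of_nonneg (by positivity) hp₀.le, ← ENNReal.ofReal_mul (by positivity),
    ← ENNReal.ofReal_mul hw₁, ← ENNReal.ofReal_mul hw,
    ← ENNReal.ofReal_add (by positivity) (by positivity),
    ← ENNReal.ofReal_add (by positivity) (by positivity)]
  exact ENNReal.ofReal_le_ofReal hreal

end Weight

lemma tsum_le_add_tsum_of_telescoping {f g h : ℕ → ℝ≥0∞}
    (hstep : ∀ n, f n + g (n + 1) ≤ g n + h n) : ∑' n, f n ≤ g 0 + ∑' n, h n := by
  have hpartial (N : ℕ) :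
      ∑ n ∈ Finset.range N, f n + g N ≤ g 0 + ∑ n ∈ Finset.range N, h n := by
    induction N with
    | zero => simp
    | succ N ih =>
      calc ∑ n ∈ Finset.range (N + 1), f n + g (N + 1)
          = ∑ n ∈ Finset.range N, f n + (f N + g (N + 1)) := by
            rw [Finset.sum_range_succ, add_assoc]
        _ ≤ ∑ n ∈ Finset.range N, f n + (g N + h N) := by gcongr _ + ?_; exact hstep N
        _ ≤ g 0 + ∑ n ∈ Finset.range N, h n + h N := by rw [← add_assoc]; gcongr
        _ = g 0 + ∑ n ∈ Finset.range (N + 1), h n := by rw [Finset.sum_range_succ, add_assoc]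
  refine ENNReal.tsum_le_of_sum_range_le fun N => ?_
  calc ∑ n ∈ Finset.range N, f n ≤ ∑ n ∈ Finset.range N, f n + g N := le_self_add
    _ ≤ g 0 + ∑ n ∈ Finset.range N, h n := hpartial N
    _ ≤ g 0 + ∑' n, h n := by gcongr; exact ENNReal.sum_le_tsum _

/-- The weighted tail `S n = ∑_{k ≥ n} ((k + 1)^α - k^α) a k`, indexed by `k = n + j`. -/
noncomputable def weightedTail (α : ℝ) (a : ℕ → ℝ≥0∞) (n : ℕ) : ℝ≥0∞ :=
  ∑' j : ℕ, ENNReal.ofReal ((((n + j : ℕ) : ℝ) + 1) ^ α - ((n + j : ℕ) : ℝ) ^ α) * a (n + j)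

/-- The normalized tail `T n = n^(-α) S n`, to which the Hardy-type inequality applies. -/
noncomputable def tailMean (α : ℝ) (a : ℕ → ℝ≥0∞) (n : ℕ) : ℝ≥0∞ :=
  ENNReal.ofReal ((n : ℝ) ^ (-α)) * weightedTail α a n

section Tail

variable (α : ℝ) (a : ℕ → ℝ≥0∞)

lemma weightedTail_eq_add_succ (n : ℕ) :
    weightedTail α a n =
      ENNReal.ofReal (((n : ℝ) + 1) ^ α - (n : ℝ) ^ α) * a n + weightedTail α a (n + 1) := by
  rw [weightedTail, weightedTail, tsum_eq_zero_add' ENNReal.summable]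
  simp only [add_zero, Nat.add_right_comm n 1, Nat.add_assoc]

lemma tailMean_one : tailMean α a 1 = weightedTail α a 1 := by
  simp [tailMean]

variable {α} {p : ℝ}

lemma ofReal_mul_rpow_add_weightedTail_succ_le {n : ℕ} (hn : 0 < n) (hp₀ : 0 < p) (hp₁ : p ≤ 1)
    (hα : 0 < α) (hαp : α * p < 1) :
    ENNReal.ofReal ((α * p / (1 - α * p)) ^ p) * a n ^ p +
        ENNReal.ofReal (telescopingWeight α p (n + 1 : ℕ)) * weightedTail α a (n + 1) ^ p ≤
      ENNReal.ofReal (telescopingWeight α p n) * weightedTail α a n ^ p + tailMean α a n ^ p := by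
  rw [tailMean, weightedTail_eq_add_succ α a n, Nat.cast_add_one]
  exact ofReal_mul_rpow_add_telescopingWeight_mul_rpow_le _ _ hp₀ hp₁ hα hαp (Nat.cast_pos.2 hn)

end Tail

theorem stmt_9_general {p α : ℝ} (a : ℕ → ℝ≥0∞) (hp₀ : 0 < p) (hp₁ : p ≤ 1) (hα : 0 < α)
    (hαp : α * p < 1) :
    ENNReal.ofReal ((α * p / (1 - α * p)) ^ p) * ∑' n : ℕ, a (n + 1) ^ p ≤
      ENNReal.ofReal (1 + 1 / (1 - α * p)) * tailMean α a 1 ^ p +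
        ∑' n : ℕ, tailMean α a (n + 2) ^ p := by
  have hd : 0 ≤ 1 / (1 - α * p) := one_div_nonneg.2 (sub_nonneg.2 hαp.le)
  calc ENNReal.ofReal ((α * p / (1 - α * p)) ^ p) * ∑' n : ℕ, a (n + 1) ^ p
      = ∑' n : ℕ, ENNReal.ofReal ((α * p / (1 - α * p)) ^ p) * a (n + 1) ^ p :=
      ENNReal.tsum_mul_left.symm
    _ ≤ ENNReal.ofReal (telescopingWeight α p (0 + 1 : ℕ)) * weightedTail α a (0 + 1) ^ p +
          ∑' n : ℕ, tailMean α a (n + 1) ^ p :=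
      tsum_le_add_tsum_of_telescoping
        (g := fun n => ENNReal.ofReal (telescopingWeight α p (n + 1 : ℕ)) *
          weightedTail α a (n + 1) ^ p)
        fun n => ofReal_mul_rpow_add_weightedTail_succ_le a n.succ_pos hp₀ hp₁ hα hαp
    _ ≤ ENNReal.ofReal (1 / (1 - α * p)) * tailMean α a 1 ^ p +
          (tailMean α a 1 ^ p + ∑' n : ℕ, tailMean α a (n + 2) ^ p) := by
      rw [tsum_eq_zero_add' ENNReal.summable, zero_add, Nat.cast_one, tailMean_one]
      gcongr
      exact telescopingWeight_one_le hp₁ hαp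
    _ = ENNReal.ofReal (1 + 1 / (1 - α * p)) * tailMean α a 1 ^ p +
          ∑' n : ℕ, tailMean α a (n + 2) ^ p := by
      rw [ENNReal.ofReal_add zero_le_one hd, ENNReal.ofReal_one]
      ring

/-- For `0 < p < 1`, `0 < α < 1/p` and `a_n ≥ 0`, with
`T_n = n^{-α} ∑_{k=n}^∞ ((k+1)^α - k^α) a_k`:
`(1 + 1/(1-αp)) T_1^p + ∑_{n≥2} T_n^p ≥ (αp/(1-αp))^p ∑_{n≥1} a_n^p`. -/
theorem stmt_9 (p α : ℝ) (hp0 : 0 < p) (hp1 : p < 1) (hα0 : 0 < α) (hα : α < 1 / p)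
    (a : ℕ → ℝ) (ha : ∀ n, 1 ≤ n → 0 ≤ a n)
    (T : ℕ → ℝ≥0∞)
    (hT : ∀ n, 1 ≤ n → T n = ENNReal.ofReal ((n : ℝ) ^ (-α)) *
      ∑' j : ℕ, ENNReal.ofReal ((((n + j : ℕ) : ℝ) + 1) ^ α - ((n + j : ℕ) : ℝ) ^ α) *
        ENNReal.ofReal (a (n + j))) :
    ENNReal.ofReal ((α * p / (1 - α * p)) ^ p) * ∑' n : ℕ, ENNReal.ofReal (a (n + 1)) ^ p ≤
      ENNReal.ofReal (1 + 1 / (1 - α * p)) * T 1 ^ p + ∑' n : ℕ, T (n + 2) ^ p := by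
  rw [hT 1 le_rfl, tsum_congr fun n => congrArg (· ^ p) (hT (n + 2) (by lia))]
  exact stmt_9_general (fun n => ENNReal.ofReal (a n)) hp0 hp1.le hα0 ((lt_div_iff₀ hp0).1 hα)
end

section
/- Let (a_n)_{n≥1} be a nonnegative real sequence. If either (i) α ≥ 1 and 0 < p ≤ 2/((α+2)(α+1)), or (ii) 0 < α ≤ 1 and 0 < p ≤ 1/(α+2), then ∑_{n=1}^∞ ( ∑_{k=n}^∞ (α·k^{α−1}/n^α)·a_k )^p ≥ (αp/(1−αp))^p · ∑_{n=1}^∞ a_n^p. -/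
open scoped ENNReal

/-!
Let `Aₙ = ∑_{k ≥ n} (α k^(α-1) / n^α) aₖ` and `δ = 1/p - α`. These averages satisfy
`Aₙ = (α/n) aₙ + (1 + 1/n)^α Aₙ₊₁`. Hölder's inequality with exponents `1/(1-p)` and `1/p` and
weights `δ` and `n (1 + 1/n)^(-αp/(1-p))` turns this recursion into
`δ (α/δ)^p aₙ^p + n Aₙ₊₁^p ≤ (δ + n - 1) Aₙ^p`, which telescopes to the theorem. The weights are
chosen to make the two terms on the left exact; the coefficient on the right is then an inequality
in the single variable `u = 1/n`, whose two sides are tangent at `u = 0` and whose defect is convex.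
-/

lemma monotoneOn_Ici_of_hasDerivAt_nonneg {f f' : ℝ → ℝ} {a : ℝ}
    (hf : ∀ t, a ≤ t → HasDerivAt f (f' t) t) (hf' : ∀ t, a ≤ t → 0 ≤ f' t) :
    MonotoneOn f (Set.Ici a) :=
  monotoneOn_of_hasDerivWithinAt_nonneg (convex_Ici a)
    (fun t ht => (hf t ht).continuousAt.continuousWithinAt)
    (fun t ht => (hf t (interior_subset ht)).hasDerivWithinAt)
    (fun t ht => hf' t (interior_subset ht))

lemma monotoneOn_Ici_of_hasDerivAt_two_nonneg {f f' f'' : ℝ → ℝ} {a : ℝ}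
    (hf : ∀ t, a ≤ t → HasDerivAt f (f' t) t) (hf' : ∀ t, a ≤ t → HasDerivAt f' (f'' t) t)
    (hf'' : ∀ t, a ≤ t → 0 ≤ f'' t) (ha : 0 ≤ f' a) :
    MonotoneOn f (Set.Ici a) :=
  monotoneOn_Ici_of_hasDerivAt_nonneg hf fun _ ht =>
    ha.trans (monotoneOn_Ici_of_hasDerivAt_nonneg hf' hf'' Set.self_mem_Ici ht ht)

lemma hasDerivAt_one_add_mul_rpow {y t : ℝ} (h : 0 < 1 + y * t) (s : ℝ) :
    HasDerivAt (fun t => (1 + y * t) ^ s) (y * s * (1 + y * t) ^ (s - 1)) t := by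
  have linear : HasDerivAt (fun t => 1 + y * t) y t := by
    simpa using ((hasDerivAt_id t).const_mul y).const_add 1
  exact linear.rpow_const (Or.inl h.ne')

lemma hasDerivAt_one_add_rpow {t : ℝ} (h : 0 < 1 + t) (s : ℝ) :
    HasDerivAt (fun t => (1 + t) ^ s) (s * (1 + t) ^ (s - 1)) t := by
  simpa using hasDerivAt_one_add_mul_rpow (y := 1) (by simpa using h) s

lemma mul_one_add_rpow_le_sq_mul_one_add_mul_rpow {y r s t : ℝ} (hy : 1 ≤ y) (hr : -1 ≤ r)
    (hs : s ≤ -1) (ht : 0 ≤ t) :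
    y * (1 + t) ^ s ≤ y ^ 2 * (1 + y * t) ^ r := by
  have hyt : 1 ≤ 1 + y * t := by nlinarith
  calc y * (1 + t) ^ s
      ≤ y * (1 + t) ^ (-1 : ℝ) := by gcongr; linarith
    _ = y ^ 2 * (y * (1 + t)) ^ (-1 : ℝ) := by
        simp only [Real.rpow_neg_one]
        field_simp
    _ ≤ y ^ 2 * (1 + y * t) ^ (-1 : ℝ) := by
        simp only [Real.rpow_neg_one]
        gcongr
        linarith
    _ ≤ y ^ 2 * (1 + y * t) ^ r := by gcongr

-- `hry` makes the first derivatives of the two sides agree at `u = 0`.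
lemma mul_add_one_add_rpow_neg_le_one_add_mul_rpow {y r γ u : ℝ} (hy : 1 ≤ y) (hr : 1 ≤ r)
    (hγ : 0 ≤ γ) (hry : r * y = y + 1 - γ) (hγr : γ * (γ + 1) ≤ r * (r - 1) * y) (hu : 0 ≤ u) :
    (1 + y) * u + (1 + u) ^ (-γ) ≤ (1 + y * u) ^ r := by
  let f : ℝ → ℝ := fun t => (1 + y * t) ^ r - (1 + y) * t - (1 + t) ^ (-γ)
  let f' : ℝ → ℝ := fun t => y * r * (1 + y * t) ^ (r - 1) - (1 + y) - (-γ) * (1 + t) ^ (-γ - 1)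
  let f'' : ℝ → ℝ := fun t => y * r * (y * (r - 1) * (1 + y * t) ^ (r - 1 - 1)) -
    (-γ) * ((-γ - 1) * (1 + t) ^ (-γ - 1 - 1))
  have hf : ∀ t, 0 ≤ t → HasDerivAt f (f' t) t := fun t ht =>
    ((hasDerivAt_one_add_mul_rpow (by positivity) r).sub
      (by simpa using (hasDerivAt_id t).const_mul (1 + y))).sub
      (hasDerivAt_one_add_rpow (by positivity) (-γ))
  have hf' : ∀ t, 0 ≤ t → HasDerivAt f' (f'' t) t := fun t ht =>
    (((hasDerivAt_one_add_mul_rpow (by positivity) (r - 1)).const_mul (y * r)).sub_const _).sub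
      ((hasDerivAt_one_add_rpow (by positivity) (-γ - 1)).const_mul (-γ))
  have hf'' : ∀ t, 0 ≤ t → 0 ≤ f'' t := by
    intro t ht
    have : 0 ≤ r - 1 := by linarith
    have powers : γ * (γ + 1) * (1 + t) ^ (-γ - 1 - 1) ≤
        r * (r - 1) * (y ^ 2 * (1 + y * t) ^ (r - 1 - 1)) :=
      calc γ * (γ + 1) * (1 + t) ^ (-γ - 1 - 1)
          ≤ r * (r - 1) * y * (1 + t) ^ (-γ - 1 - 1) := by gcongr
        _ = r * (r - 1) * (y * (1 + t) ^ (-γ - 1 - 1)) := by ring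
        _ ≤ r * (r - 1) * (y ^ 2 * (1 + y * t) ^ (r - 1 - 1)) := by
            gcongr r * (r - 1) * ?_
            exact mul_one_add_rpow_le_sq_mul_one_add_mul_rpow hy (by linarith) (by linarith) ht
    simp only [f'']
    linarith
  have tangent : f' 0 = 0 := by
    simp only [f', mul_zero, add_zero, Real.one_rpow]
    linarith
  have hmono := monotoneOn_Ici_of_hasDerivAt_two_nonneg hf hf' hf'' tangent.ge
    Set.self_mem_Ici (Set.mem_Ici.2 hu) hu
  simp only [f, mul_zero, add_zero, Real.one_rpow] at hmono
  linarith

lemma rpow_one_sub_mul_rpow_add_le {p : ℝ} (hp : 0 < p) (hp1 : p < 1) (w z c d : ℝ≥0∞) :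
    w ^ (1 - p) * c ^ p + z ^ (1 - p) * d ^ p ≤ (w + z) ^ (1 - p) * (c + d) ^ p := by
  have holder := ENNReal.inner_le_Lp_mul_Lq Finset.univ ![w ^ (1 - p), z ^ (1 - p)]
    ![c ^ p, d ^ p] (Real.HolderConjugate.one_sub_inv_inv hp hp1)
  simpa [Fin.sum_univ_two, ENNReal.rpow_rpow_inv, hp.ne', (sub_pos.2 hp1).ne'] using holder

/-- The average `∑_{k ≥ n} (α k^(α-1) / n^α) a_k` of the tail of `a` from index `n ≥ 1` on, with
`k = n + j`; its value at `n = 0` has no meaning. -/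
noncomputable def tailAverage (α : ℝ) (a : ℕ → ℝ≥0∞) (n : ℕ) : ℝ≥0∞ :=
  ∑' j : ℕ, ENNReal.ofReal (α * ((n + j : ℕ) : ℝ) ^ (α - 1) / (n : ℝ) ^ α) * a (n + j)

lemma tailAverage_eq_add (α : ℝ) (a : ℕ → ℝ≥0∞) {n : ℕ} (hn : 0 < n) :
    tailAverage α a n = ENNReal.ofReal (α / n) * a n +
      ENNReal.ofReal ((1 + (n : ℝ)⁻¹) ^ α) * tailAverage α a (n + 1) := by
  have hn' : (0 : ℝ) < n := Nat.cast_pos.2 hn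
  rw [tailAverage, tsum_eq_zero_add' ENNReal.summable, tailAverage, ← ENNReal.tsum_mul_left]
  congr 1
  · rw [add_zero, Real.rpow_sub_one hn'.ne']
    congr 2
    field_simp
  · refine tsum_congr fun j => ?_
    have ratio : 1 + (n : ℝ)⁻¹ = ((n + 1 : ℕ) : ℝ) / n := by
      push_cast
      field_simp
    rw [← mul_assoc, ← ENNReal.ofReal_mul (by positivity), ratio,
      Real.div_rpow (by positivity) (by positivity), add_right_comm n 1 j, ← add_assoc]
    congr 2
    field_simp

lemma two_le_inv_sub {α p : ℝ} (hp : 0 < p) (hαp : (α + 2) * p ≤ 1) : 2 ≤ p⁻¹ - α := by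
  have : α + 2 ≤ p⁻¹ := by rwa [← one_div, le_div_iff₀ hp]
  linarith

lemma mul_inv_add_one_add_inv_rpow_neg_le {α p n : ℝ} (hα : 0 ≤ α) (hp : 0 < p)
    (hαp : (α + 2) * p ≤ 1) (hαp' : α * p * (1 + α * p - p) ≤ 1 - α * p - p) (hn : 0 < n) :
    (p⁻¹ - α) * n⁻¹ + (1 + n⁻¹) ^ (-(α * p / (1 - p))) ≤
      (1 + (p⁻¹ - α - 1) * n⁻¹) ^ (1 - p)⁻¹ := by
  have hp1 : 0 < 1 - p := by nlinarith
  have hy : 1 ≤ p⁻¹ - α - 1 := by linarith [two_le_inv_sub hp hαp]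
  have hr : 1 ≤ (1 - p)⁻¹ := (one_le_inv₀ hp1).2 (by linarith)
  have tangent : (1 - p)⁻¹ * (p⁻¹ - α - 1) = p⁻¹ - α - 1 + 1 - α * p / (1 - p) := by
    field_simp
    ring
  have curvature : α * p / (1 - p) * (α * p / (1 - p) + 1) ≤
      (1 - p)⁻¹ * ((1 - p)⁻¹ - 1) * (p⁻¹ - α - 1) :=
    calc α * p / (1 - p) * (α * p / (1 - p) + 1)
        = α * p * (1 + α * p - p) / (1 - p) ^ 2 := by
          field_simp
          ring
      _ ≤ (1 - α * p - p) / (1 - p) ^ 2 := by gcongr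
      _ = (1 - p)⁻¹ * ((1 - p)⁻¹ - 1) * (p⁻¹ - α - 1) := by
          field_simp
          ring
  simpa only [add_sub_cancel] using mul_add_one_add_rpow_neg_le_one_add_mul_rpow hy hr
    (by positivity) tangent curvature (inv_nonneg.2 hn.le)

lemma rpow_mul_add_rpow_one_sub_le {α p n : ℝ} (hα : 0 ≤ α) (hp : 0 < p)
    (hαp : (α + 2) * p ≤ 1) (hαp' : α * p * (1 + α * p - p) ≤ 1 - α * p - p) (hn : 0 < n) :
    n ^ p * (p⁻¹ - α + n * (1 + n⁻¹) ^ (-(α * p / (1 - p)))) ^ (1 - p) ≤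
      n + (p⁻¹ - α - 1) := by
  have hp1 : 0 < 1 - p := by nlinarith
  have hδ : 0 ≤ p⁻¹ - α - 1 := by linarith [two_le_inv_sub hp hαp]
  have hδ' : 0 ≤ p⁻¹ - α := by linarith
  set B := (1 + n⁻¹) ^ (-(α * p / (1 - p)))
  calc n ^ p * (p⁻¹ - α + n * B) ^ (1 - p)
      = n ^ p * (n * ((p⁻¹ - α) * n⁻¹ + B)) ^ (1 - p) := by
        congr 2
        field_simp
    _ = n * ((p⁻¹ - α) * n⁻¹ + B) ^ (1 - p) := by
        rw [Real.mul_rpow hn.le (by positivity), ← mul_assoc, ← Real.rpow_add hn,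
          add_sub_cancel, Real.rpow_one]
    _ ≤ n * ((1 + (p⁻¹ - α - 1) * n⁻¹) ^ (1 - p)⁻¹) ^ (1 - p) := by
        gcongr
        exact mul_inv_add_one_add_inv_rpow_neg_le hα hp hαp hαp' hn
    _ = n + (p⁻¹ - α - 1) := by
        rw [Real.rpow_inv_rpow (by positivity) hp1.ne']
        field_simp

lemma mul_rpow_add_mul_rpow_le_s11 {α p n : ℝ} (hα : 0 ≤ α) (hp : 0 < p)
    (hαp : (α + 2) * p ≤ 1) (hαp' : α * p * (1 + α * p - p) ≤ 1 - α * p - p) (hn : 0 < n)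
    (c d : ℝ≥0∞) :
    ENNReal.ofReal (n ^ p * (p⁻¹ - α) ^ (1 - p)) * c ^ p +
        ENNReal.ofReal (n * (1 + n⁻¹) ^ (-(α * p))) * d ^ p ≤
      ENNReal.ofReal (n + (p⁻¹ - α - 1)) * (c + d) ^ p := by
  have hp1 : 0 < 1 - p := by nlinarith
  have hδ : 0 ≤ p⁻¹ - α := by linarith [two_le_inv_sub hp hαp]
  set τ := n * (1 + n⁻¹) ^ (-(α * p / (1 - p))) with hτ
  have hτ0 : 0 ≤ τ := by positivity
  have τ_rpow : n * (1 + n⁻¹) ^ (-(α * p)) = n ^ p * τ ^ (1 - p) := by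
    rw [hτ, Real.mul_rpow hn.le (by positivity), ← mul_assoc, ← Real.rpow_add hn, add_sub_cancel,
      Real.rpow_one, ← Real.rpow_mul (by positivity), neg_mul, div_mul_cancel₀ _ hp1.ne']
  have ofReal_weight : ∀ w : ℝ, 0 ≤ w →
      ENNReal.ofReal (n ^ p * w ^ (1 - p)) = ENNReal.ofReal (n ^ p) * ENNReal.ofReal w ^ (1 - p) :=
    fun w hw => by
      rw [ENNReal.ofReal_mul (by positivity), ENNReal.ofReal_rpow_of_nonneg hw hp1.le]
  rw [τ_rpow, ofReal_weight _ hδ, ofReal_weight _ hτ0, mul_assoc, mul_assoc, ← mul_add]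
  calc ENNReal.ofReal (n ^ p) * (ENNReal.ofReal (p⁻¹ - α) ^ (1 - p) * c ^ p +
        ENNReal.ofReal τ ^ (1 - p) * d ^ p)
      ≤ ENNReal.ofReal (n ^ p) *
          ((ENNReal.ofReal (p⁻¹ - α) + ENNReal.ofReal τ) ^ (1 - p) * (c + d) ^ p) := by
        gcongr
        exact rpow_one_sub_mul_rpow_add_le hp (by linarith) _ _ c d
    _ = ENNReal.ofReal (n ^ p * (p⁻¹ - α + τ) ^ (1 - p)) * (c + d) ^ p := by
        rw [← ENNReal.ofReal_add hδ hτ0, ofReal_weight _ (by positivity), mul_assoc]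
    _ ≤ ENNReal.ofReal (n + (p⁻¹ - α - 1)) * (c + d) ^ p := by
        gcongr
        exact rpow_mul_add_rpow_one_sub_le hα hp hαp hαp' hn

lemma mul_add_mul_tailAverage_succ_rpow_le {α p : ℝ} (hα : 0 ≤ α) (hp : 0 < p)
    (hαp : (α + 2) * p ≤ 1) (hαp' : α * p * (1 + α * p - p) ≤ 1 - α * p - p) (a : ℕ → ℝ≥0∞)
    {n : ℕ} (hn : 0 < n) :
    ENNReal.ofReal (p⁻¹ - α) * (ENNReal.ofReal ((α * p / (1 - α * p)) ^ p) * a n ^ p) +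
        n * tailAverage α a (n + 1) ^ p ≤
      ENNReal.ofReal (n + (p⁻¹ - α - 1)) * tailAverage α a n ^ p := by
  have hn' : (0 : ℝ) < n := Nat.cast_pos.2 hn
  have hδ : 0 < p⁻¹ - α := by linarith [two_le_inv_sub hp hαp]
  have constant : α * p / (1 - α * p) = α / (p⁻¹ - α) := by
    rw [← mul_div_mul_right α _ hp.ne', sub_mul, inv_mul_cancel₀ hp.ne']
  have ofReal_mul_rpow : ∀ {x y : ℝ} (c : ℝ≥0∞), 0 ≤ x → 0 ≤ y →
      ENNReal.ofReal x * (ENNReal.ofReal y * c) ^ p = ENNReal.ofReal (x * y ^ p) * c ^ p :=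
    fun c hx hy => by
      rw [ENNReal.mul_rpow_of_nonneg _ _ hp.le, ENNReal.ofReal_rpow_of_nonneg hy hp.le,
        ENNReal.ofReal_mul hx, mul_assoc]
  have first_coeff : (n : ℝ) ^ p * (p⁻¹ - α) ^ (1 - p) * (α / n) ^ p =
      (p⁻¹ - α) * (α * p / (1 - α * p)) ^ p := by
    rw [constant, Real.div_rpow hα hn'.le, Real.div_rpow hα hδ.le, Real.rpow_sub hδ,
      Real.rpow_one]
    field_simp
  have second_coeff : (n : ℝ) * (1 + (n : ℝ)⁻¹) ^ (-(α * p)) * ((1 + (n : ℝ)⁻¹) ^ α) ^ p = n := by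
    rw [← Real.rpow_mul (by positivity), mul_assoc, ← Real.rpow_add (by positivity),
      neg_add_cancel, Real.rpow_zero, mul_one]
  have step := mul_rpow_add_mul_rpow_le_s11 hα hp hαp hαp' hn' (ENNReal.ofReal (α / n) * a n)
    (ENNReal.ofReal ((1 + (n : ℝ)⁻¹) ^ α) * tailAverage α a (n + 1))
  rwa [← tailAverage_eq_add α a hn, ofReal_mul_rpow _ (by positivity) (by positivity),
    ofReal_mul_rpow _ (by positivity) (by positivity), first_coeff, second_coeff,
    ENNReal.ofReal_mul hδ.le, mul_assoc, ENNReal.ofReal_natCast] at step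

lemma mul_sum_range_add_mul_le {R : Type*} [Semiring R] [PartialOrder R] [IsOrderedAddMonoid R]
    {δ : R} {b A : ℕ → R} (h : ∀ n, δ * b n + ↑(n + 1) * A (n + 1) ≤ (n + δ) * A n) (N : ℕ) :
    δ * ∑ n ∈ Finset.range N, b n + N * A N ≤ δ * ∑ n ∈ Finset.range N, A n := by
  induction N with
  | zero => simp
  | succ N ih =>
    calc δ * ∑ n ∈ Finset.range (N + 1), b n + ↑(N + 1) * A (N + 1)
        = δ * ∑ n ∈ Finset.range N, b n + (δ * b N + ↑(N + 1) * A (N + 1)) := by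
          rw [Finset.sum_range_succ, mul_add, add_assoc]
      _ ≤ δ * ∑ n ∈ Finset.range N, b n + (N + δ) * A N := by
          gcongr
          exact h N
      _ = δ * ∑ n ∈ Finset.range N, b n + N * A N + δ * A N := by rw [add_mul, add_assoc]
      _ ≤ δ * ∑ n ∈ Finset.range N, A n + δ * A N := by gcongr
      _ = δ * ∑ n ∈ Finset.range (N + 1), A n := by rw [Finset.sum_range_succ, mul_add]

lemma tsum_le_tsum_of_mul_add_mul_le {δ : ℝ≥0∞} (hδ : δ ≠ 0) (hδ' : δ ≠ ∞) {b A : ℕ → ℝ≥0∞}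
    (h : ∀ n, δ * b n + ↑(n + 1) * A (n + 1) ≤ (n + δ) * A n) :
    ∑' n, b n ≤ ∑' n, A n :=
  ENNReal.tsum_le_of_sum_range_le fun N =>
    ((ENNReal.mul_le_mul_iff_right hδ hδ').1
      (le_self_add.trans (mul_sum_range_add_mul_le h N))).trans (ENNReal.sum_le_tsum _)

/-- For large `α` this allows `p` up to about `(√2 - 1)/α`, whereas the bound in `stmt_11` is of
order `2/α²`. -/
theorem stmt_11_general {p α : ℝ} (hα : 0 ≤ α) (hp : 0 < p) (hαp : (α + 2) * p ≤ 1)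
    (hαp' : α * p * (1 + α * p - p) ≤ 1 - α * p - p) (a : ℕ → ℝ≥0∞) :
    ENNReal.ofReal ((α * p / (1 - α * p)) ^ p) * ∑' n : ℕ, a (n + 1) ^ p ≤
      ∑' n : ℕ, tailAverage α a (n + 1) ^ p := by
  have hδ : 0 < p⁻¹ - α := by linarith [two_le_inv_sub hp hαp]
  rw [← ENNReal.tsum_mul_left]
  refine tsum_le_tsum_of_mul_add_mul_le (ENNReal.ofReal_pos.2 hδ).ne' ENNReal.ofReal_ne_top
    fun n => (mul_add_mul_tailAverage_succ_rpow_le hα hp hαp hαp' a n.succ_pos).trans_eq ?_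
  rw [← ENNReal.ofReal_natCast n, ← ENNReal.ofReal_add n.cast_nonneg hδ.le]
  congr 2
  push_cast
  ring

lemma parameter_bounds_of_cases {p α : ℝ}
    (hcase : (1 ≤ α ∧ 0 < p ∧ p ≤ 2 / ((α + 2) * (α + 1))) ∨
      (0 < α ∧ α ≤ 1 ∧ 0 < p ∧ p ≤ 1 / (α + 2))) :
    0 ≤ α ∧ 0 < p ∧ (α + 2) * p ≤ 1 ∧ α * p * (1 + α * p - p) ≤ 1 - α * p - p := by
  rcases hcase with ⟨hα, hp, hpα⟩ | ⟨hα, hα1, hp, hpα⟩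
  · rw [le_div_iff₀ (by positivity)] at hpα
    have hαp : (α + 2) * p ≤ 1 := by nlinarith
    have hp2 : p ≤ 1 / 2 := by nlinarith
    have hsq : α * (α - 1) * p * p ≤ α * (α - 1) * p * (1 / 2) := by
      have : 0 ≤ α - 1 := by linarith
      gcongr
    exact ⟨by linarith, hp, hαp, by linarith⟩
  · rw [le_div_iff₀ (by positivity)] at hpα
    have hneg : α * p * (α * p - p) ≤ 0 :=
      mul_nonpos_of_nonneg_of_nonpos (by positivity) (by nlinarith)
    exact ⟨hα.le, hp, by linarith, by nlinarith⟩

lemma tailAverage_ofReal_succ {α : ℝ} (hα : 0 ≤ α) (a : ℕ → ℝ) (n : ℕ) :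
    tailAverage α (fun k => ENNReal.ofReal (a k)) (n + 1) =
      ∑' k : ℕ, ENNReal.ofReal
        (α * ((n + 1 + k : ℕ) : ℝ) ^ (α - 1) / ((n : ℝ) + 1) ^ α * a (n + 1 + k)) :=
  tsum_congr fun k => by rw [Nat.cast_succ n, ENNReal.ofReal_mul (by positivity)]

/-- If either `α ≥ 1` and `0 < p ≤ 2/((α+2)(α+1))`, or `0 < α ≤ 1` and
`0 < p ≤ 1/(α+2)`, then
`∑_{n≥1} (∑_{k≥n} (α k^{α-1}/n^α) a_k)^p ≥ (αp/(1-αp))^p ∑_{n≥1} a_n^p`. -/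
theorem stmt_11 (p α : ℝ)
    (hcase : (1 ≤ α ∧ 0 < p ∧ p ≤ 2 / ((α + 2) * (α + 1))) ∨
      (0 < α ∧ α ≤ 1 ∧ 0 < p ∧ p ≤ 1 / (α + 2)))
    (a : ℕ → ℝ) (ha : ∀ n, 1 ≤ n → 0 ≤ a n) :
    ENNReal.ofReal ((α * p / (1 - α * p)) ^ p) * ∑' n : ℕ, ENNReal.ofReal (a (n + 1)) ^ p ≤
      ∑' n : ℕ,
        (∑' k : ℕ, ENNReal.ofReal
          (α * ((n + 1 + k : ℕ) : ℝ) ^ (α - 1) / ((n : ℝ) + 1) ^ α * a (n + 1 + k))) ^ p := by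
  obtain ⟨hα, hp, hαp, hαp'⟩ := parameter_bounds_of_cases hcase
  simpa only [tailAverage_ofReal_succ hα a] using
    stmt_11_general hα hp hαp hαp' fun n => ENNReal.ofReal (a n)
end
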